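/- arXiv:1811.11324 — 3 statements merged into one kernel-verified Lean document; each statement's English description precedes it below -/
import Mathlib

section
/- Let T be a scalar Calderón–Zygmund operator on ℝ^d with modulus of continuity ω satisfying the Dini condition, let ρ ∈ (2,∞), assume V_ρ(T_*) is bounded on L^q(ℝ^d) for some q ∈ (1,∞), and let r ∈ (1, min{q,ρ}). Then there is a constant C, independent of the cube Q₀, such that for every f ∈ L^q(ℝ^d) and a.e. x ∈ Q₀, M_{V_ρ(T_*),Q₀} f(x) ≤ C [M(|f|^r)(x)]^{1/r} + V_ρ(T_* f)(x), where M is the Hardy–Littlewood maximal operator over cubes. -/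
open MeasureTheory Set Filter Classical
open scoped ENNReal
noncomputable section

abbrev Rd (d : ℕ) := EuclideanSpace ℝ (Fin d)

/-- An axis-parallel (half-open) cube in `ℝ^d`, given by its center and side length. -/
structure Cube (d : ℕ) where
  c : Fin d → ℝ
  l : ℝ
  hl : 0 < l

/-- The underlying (half-open) set of a cube. -/
def Cube.set {d : ℕ} (Q : Cube d) : Set (Rd d) :=
  {y | ∀ i, Q.c i - Q.l / 2 ≤ y i ∧ y i < Q.c i + Q.l / 2}

/-- The (half-open) set `tQ`, the cube concentric with `Q` of side length `t·ℓ(Q)`. -/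
def Cube.dilate {d : ℕ} (Q : Cube d) (t : ℝ) : Set (Rd d) :=
  {y | ∀ i, Q.c i - t * Q.l / 2 ≤ y i ∧ y i < Q.c i + t * Q.l / 2}

/-- The volume `|Q| = ℓ(Q)^d` of a cube, as an extended nonnegative real. -/
def Cube.vol {d : ℕ} (Q : Cube d) : ℝ≥0∞ := ENNReal.ofReal (Q.l ^ d)

/-- `Q` is one of the dyadic subcubes of `Q₀` obtained by repeated subdivision of `Q₀`
into `2^d` congruent subcubes. -/
def IsDyadicSubcube {d : ℕ} (Q₀ Q : Cube d) : Prop :=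
  ∃ (k : ℕ) (m : Fin d → ℕ), (∀ i, m i < 2 ^ k) ∧ Q.l = Q₀.l / 2 ^ k ∧
    ∀ i, Q.c i = Q₀.c i - Q₀.l / 2 + ((m i : ℝ) + 1 / 2) * (Q₀.l / 2 ^ k)
/-- A scalar Calderón–Zygmund operator on `ℝ^d` with Dini modulus of continuity:
a linear operator `T` bounded on `L²(ℝ^d)` associated with a kernel `K` satisfying the
size condition and the `ω`-smoothness condition, where `ω` is increasing, subadditive,
vanishes at `0`, and satisfies the Dini condition `∫₀¹ ω(t) dt/t < ∞`. -/
structure CZO (d : ℕ) where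
  K : Rd d → Rd d → ℝ
  measK : Measurable (Function.uncurry K)
  ω : ℝ → ℝ
  Cst : ℝ
  hCst : 0 < Cst
  ω_mono : MonotoneOn ω (Set.Ici 0)
  ω_zero : ω 0 = 0
  ω_subadd : ∀ s t : ℝ, 0 ≤ s → 0 ≤ t → ω (s + t) ≤ ω s + ω t
  dini : IntegrableOn (fun t => ω t / t) (Set.Ioo (0 : ℝ) 1)
  size : ∀ x y : Rd d, x ≠ y → |K x y| ≤ Cst / dist x y ^ d
  smooth : ∀ x x' y : Rd d, x ≠ y → dist x x' ≤ dist x y / 2 →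
    |K x y - K x' y| + |K y x - K y x'| ≤ Cst * ω (dist x x' / dist x y) / dist x y ^ d
  T : Lp ℝ 2 (volume : Measure (Rd d)) →L[ℝ] Lp ℝ 2 (volume : Measure (Rd d))
  assoc : ∀ f : Lp ℝ 2 (volume : Measure (Rd d)),
    ∀ᵐ x ∂(volume : Measure (Rd d)), x ∉ tsupport (f : Rd d → ℝ) →
      (T f : Rd d → ℝ) x = ∫ y, K x y * f y

/-- The truncated singular integral `T_ε f(x) = ∫_{|x-y|>ε} K(x,y) f(y) dy`. -/
def CZO.trunc {d : ℕ} (S : CZO d) (ε : ℝ) (f : Rd d → ℝ) (x : Rd d) : ℝ :=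
  ∫ y in {y : Rd d | ε < dist x y}, S.K x y * f y

/-- The variation operator `V_ρ(T_* f)(x)`, with values in `[0,∞]`: the supremum over all
strictly decreasing positive sequences `ε_i → 0` of `(Σ_i |T_{ε_{i+1}}f(x) - T_{ε_i}f(x)|^ρ)^{1/ρ}`. -/
def CZO.var {d : ℕ} (S : CZO d) (ρ : ℝ) (f : Rd d → ℝ) (x : Rd d) : ℝ≥0∞ :=
  ⨆ (ε : ℕ → ℝ) (_ : StrictAnti ε ∧ (∀ i, 0 < ε i) ∧ Tendsto ε atTop (nhds 0)),
    (∑' i : ℕ, ENNReal.ofReal |S.trunc (ε (i + 1)) f x - S.trunc (ε i) f x| ^ ρ) ^ (1 / ρ)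

/-- `V_ρ(T_*)` is bounded on `L^q(ℝ^d)`. -/
def CZO.VarBdd {d : ℕ} (S : CZO d) (ρ q : ℝ) : Prop :=
  ∃ A : ℝ, 0 < A ∧ ∀ f : Rd d → ℝ, Measurable f →
    ∫⁻ x, S.var ρ f x ^ q ∂volume ≤ ENNReal.ofReal A * ∫⁻ x, ENNReal.ofReal |f x| ^ q ∂volume

/-- The weak `(1,1)` operator (quasi-)norm `‖V_ρ(T_*)‖_{L¹ → L^{1,∞}}`. -/
def CZO.weak11Norm {d : ℕ} (S : CZO d) (ρ : ℝ) : ℝ≥0∞ :=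
  sInf {A : ℝ≥0∞ | ∀ f : Rd d → ℝ, Measurable f → ∀ t : ℝ, 0 < t →
    ENNReal.ofReal t * volume {x | ENNReal.ofReal t < S.var ρ f x} ≤
      A * ∫⁻ x, ENNReal.ofReal |f x| ∂volume}

/-- The local grand maximal truncated operator `M_{V_ρ(T_*),Q₀}`. -/
def CZO.grandMaxLoc {d : ℕ} (S : CZO d) (ρ : ℝ) (Q₀ : Cube d) (f : Rd d → ℝ) (x : Rd d) : ℝ≥0∞ :=
  if x ∈ Q₀.set then
    ⨆ (Q : Cube d) (_ : x ∈ Q.set ∧ Q.set ⊆ Q₀.set),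
      essSup (fun ξ => S.var ρ ((Q₀.dilate 3 \ Q.dilate 3).indicator f) ξ)
        (volume.restrict Q.set)
  else 0

/-- The (global) grand maximal truncated operator `M_{V_ρ(T_*)}`. -/
def CZO.grandMax {d : ℕ} (S : CZO d) (ρ : ℝ) (f : Rd d → ℝ) (x : Rd d) : ℝ≥0∞ :=
  ⨆ (Q : Cube d) (_ : x ∈ Q.set),
    essSup (fun ξ => S.var ρ (((Q.dilate 3)ᶜ).indicator f) ξ) (volume.restrict Q.set)

/-- The Hardy–Littlewood maximal operator over cubes, with values in `[0,∞]`. -/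
def maxCube {d : ℕ} (f : Rd d → ℝ) (x : Rd d) : ℝ≥0∞ :=
  ⨆ (Q : Cube d) (_ : x ∈ Q.set), Q.vol⁻¹ * ∫⁻ y in Q.set, ENNReal.ofReal |f y|

/-- The average `⟨|f|⟩_{3Q} = (1/|3Q|) ∫_{3Q} |f|`. -/
def avg3 {d : ℕ} (Q : Cube d) (f : Rd d → ℝ) : ℝ :=
  (∫ y in Q.dilate 3, |f y|) / (3 * Q.l) ^ d
/-- The Euclidean norm of a vector in `ℝ^n`. -/
def enorm' {n : ℕ} (v : Fin n → ℝ) : ℝ := Real.sqrt (∑ i, v i ^ 2)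

/-- The operator norm (with respect to Euclidean norms) of an `n × n` real matrix. -/
def matOpNorm {n : ℕ} (A : Matrix (Fin n) (Fin n) ℝ) : ℝ :=
  sSup ((fun v => enorm' (A.mulVec v)) '' {v | enorm' v ≤ 1})

/-- The spectral power `A^s` of a symmetric matrix `A = U D Uᵗ`, defined as `U D^s Uᵗ`
(junk value `A` if `A` is not symmetric). -/
def Matrix.rpowH {n : ℕ} (A : Matrix (Fin n) (Fin n) ℝ) (s : ℝ) : Matrix (Fin n) (Fin n) ℝ :=
  if h : A.IsHermitian then
    (h.eigenvectorUnitary : Matrix (Fin n) (Fin n) ℝ) *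
      Matrix.diagonal (fun i => h.eigenvalues i ^ s) *
      star (h.eigenvectorUnitary : Matrix (Fin n) (Fin n) ℝ)
  else A

/-- A matrix weight on `ℝ^d`: a measurable function with a.e. symmetric positive definite
values whose operator norm is locally integrable. -/
structure MatrixWeight (d n : ℕ) where
  W : Rd d → Matrix (Fin n) (Fin n) ℝ
  meas : ∀ i j, Measurable fun x => W x i j
  pd : ∀ᵐ x : Rd d, (W x).PosDef
  locInt : LocallyIntegrable (fun x => matOpNorm (W x)) (volume : Measure (Rd d))

/-- The matrix `A_p` characteristic `[W]_{A_p}`. -/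
def MatrixWeight.apConst {d n : ℕ} (W : MatrixWeight d n) (p : ℝ) : ℝ≥0∞ :=
  ⨆ Q : Cube d, Q.vol⁻¹ * ∫⁻ x in Q.set,
    (Q.vol⁻¹ * ∫⁻ t in Q.set,
        ENNReal.ofReal (matOpNorm ((W.W x).rpowH (1 / p) * (W.W t).rpowH (-(1 / p))))
          ^ (p / (p - 1))) ^ (p - 1)

/-- The norm of `f` in `L^p(W)`. -/
def MatrixWeight.wNorm {d n : ℕ} (W : MatrixWeight d n) (p : ℝ)
    (f : Rd d → Fin n → ℝ) : ℝ≥0∞ :=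
  (∫⁻ x, ENNReal.ofReal (enorm' (((W.W x).rpowH (1 / p)).mulVec (f x))) ^ p) ^ (1 / p)

/-- The Euclidean length `|V_ρ(T_{n,*} f⃗)(x)|` of the componentwise variation vector
(with values in `[0,∞]`). -/
def CZO.varVecNorm {d : ℕ} (n : ℕ) (S : CZO d) (ρ : ℝ) (f : Rd d → Fin n → ℝ)
    (x : Rd d) : ℝ≥0∞ :=
  (∑ j : Fin n, S.var ρ (fun y => f y j) x ^ (2 : ℝ)) ^ ((1 : ℝ) / 2)

/-- An `η`-sparse family of cubes. -/
def IsSparse {d : ℕ} (η : ℝ) (F : Set (Cube d)) : Prop :=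
  ∃ E : Cube d → Set (Rd d),
    (∀ Q ∈ F, E Q ⊆ Q.set ∧ MeasurableSet (E Q) ∧ ENNReal.ofReal η * Q.vol ≤ volume (E Q)) ∧
    F.PairwiseDisjoint E

/-- The convex body average `⟨⟨f⃗⟩⟩_{tQ}` of a vector-valued function over the cube `tQ`. -/
def convexBodyAvg {d n : ℕ} (f : Rd d → Fin n → ℝ) (Q : Cube d) (t : ℝ) :
    Set (Fin n → ℝ) :=
  {v | ∃ φ : Rd d → ℝ, Measurable φ ∧ (∀ y, |φ y| ≤ 1) ∧
    ∀ j, v j = (∫ y in Q.dilate t, φ y * f y j) / (t * Q.l) ^ d}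


lemma gm_meas_ann {d : ℕ} (x : Rd d) (a b : ℝ) :
    MeasurableSet {y : Rd d | a < dist x y ∧ dist x y ≤ b} := by
  have h : Measurable fun y : Rd d => dist x y := by fun_prop
  exact h (measurableSet_Ioc (a := a) (b := b))

lemma gm_meas_gt {d : ℕ} (x : Rd d) (a : ℝ) :
    MeasurableSet {y : Rd d | a < dist x y} := by
  have h : Measurable fun y : Rd d => dist x y := by fun_prop
  exact h (measurableSet_Ioi (a := a))

lemma gm_lp_mono (a : ℕ → ℝ≥0∞) {s p : ℝ} (hs : 0 < s) (hsp : s ≤ p) :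
    (∑' i, a i ^ p) ^ (1 / p) ≤ (∑' i, a i ^ s) ^ (1 / s) := by
  have hp : 0 < p := hs.trans_le hsp
  set N := (∑' i, a i ^ s) ^ (1 / s) with hN
  have hNs : N ^ s = ∑' i, a i ^ s := by
    rw [hN, ← ENNReal.rpow_mul, one_div_mul_cancel hs.ne', ENNReal.rpow_one]
  have hle : ∀ i, a i ≤ N := fun i => by
    have : a i ^ s ≤ N ^ s := by rw [hNs]; exact ENNReal.le_tsum i
    exact (ENNReal.rpow_le_rpow_iff hs).1 this
  have : (∑' i, a i ^ p) ≤ N ^ p := by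
    calc (∑' i, a i ^ p) = ∑' i, a i ^ (p - s) * a i ^ s := by
          congr 1; ext i
          rw [← ENNReal.rpow_add_of_nonneg _ _ (by linarith) hs.le]; congr 1; ring
      _ ≤ ∑' i, N ^ (p - s) * a i ^ s := by
          gcongr with i
          exact hle i
      _ = N ^ (p - s) * N ^ s := by rw [ENNReal.tsum_mul_left, hNs]
      _ = N ^ p := by
          rw [← ENNReal.rpow_add_of_nonneg _ _ (by linarith) hs.le]; congr 1; ring
  calc (∑' i, a i ^ p) ^ (1 / p) ≤ (N ^ p) ^ (1 / p) := by gcongr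
    _ = N := by rw [← ENNReal.rpow_mul, mul_one_div_cancel hp.ne', ENNReal.rpow_one]

lemma gm_minkowski (a b : ℕ → ℝ≥0∞) {p : ℝ} (hp : 1 ≤ p) :
    (∑' i, (a i + b i) ^ p) ^ (1 / p) ≤
      (∑' i, a i ^ p) ^ (1 / p) + (∑' i, b i ^ p) ^ (1 / p) := by
  have := ENNReal.lintegral_Lp_add_le (μ := (Measure.count : Measure ℕ)) (f := a) (g := b)
    (measurable_of_countable _).aemeasurable (measurable_of_countable _).aemeasurable hp
  simpa [lintegral_count] using this

lemma gm_minkowski3 (u v a b : ℕ → ℝ≥0∞) {r p : ℝ} (hp : 1 ≤ p) (hr : 0 < r) (hrp : r ≤ p)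
    (h : ∀ i, u i ≤ v i + (a i + b i)) :
    (∑' i, u i ^ p) ^ (1 / p) ≤
      (∑' i, v i ^ p) ^ (1 / p) + ((∑' i, a i) + (∑' i, b i ^ r) ^ (1 / r)) := by
  have h1 := gm_lp_mono a one_pos hp
  have h2 := gm_lp_mono b hr hrp
  simp only [ENNReal.rpow_one, div_one] at h1
  calc (∑' i, u i ^ p) ^ (1 / p) ≤ (∑' i, (v i + (a i + b i)) ^ p) ^ (1 / p) := by
        gcongr with i
        exact h i
    _ ≤ _ := gm_minkowski _ _ hp
    _ ≤ _ := by
        gcongr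
        exact (gm_minkowski _ _ hp).trans (add_le_add h1 h2)

lemma gm_annuli {d : ℕ} (x : Rd d) (F : Rd d → ℝ≥0∞) (hFm : Measurable F) {R A : ℝ} (hR : 0 < R)
    (m : ℝ≥0∞)
    (hF : ∀ t : ℝ, 0 < t → ∫⁻ y in Metric.closedBall x t, F y ≤ ENNReal.ofReal (A * t ^ d) * m)
    (w : Rd d → ℝ≥0∞) (W : ℕ → ℝ≥0∞)
    (hw : ∀ k y, 2 ^ k * R < dist x y → dist x y ≤ 2 ^ (k + 1) * R → w y ≤ W k) :
    ∫⁻ y in {y | R < dist x y}, w y * F y ≤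
      ∑' k, W k * (ENNReal.ofReal (A * (2 ^ (k + 1) * R) ^ d) * m) := by
  have hsub : {y : Rd d | R < dist x y} ⊆
      ⋃ k : ℕ, {y | 2 ^ k * R < dist x y ∧ dist x y ≤ 2 ^ (k + 1) * R} := by
    intro y hy
    simp only [mem_ofPred_eq] at hy
    simp only [mem_iUnion, mem_ofPred_eq]
    have hex : ∃ n : ℕ, dist x y ≤ 2 ^ n * R := by
      obtain ⟨n, hn⟩ := pow_unbounded_of_one_lt (dist x y / R) (one_lt_two)
      exact ⟨n, by rw [div_lt_iff₀ hR] at hn; exact hn.le⟩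
    have hmin := Nat.find_spec hex
    have hne : Nat.find hex ≠ 0 := by
      intro h0
      rw [h0] at hmin
      simp at hmin; linarith
    obtain ⟨k, hk⟩ := Nat.exists_eq_succ_of_ne_zero hne
    refine ⟨k, ?_, ?_⟩
    · have := Nat.find_min hex (m := k) (by omega)
      exact not_le.1 this
    · rw [hk] at hmin; exact hmin
  have hmeas : ∀ k : ℕ, MeasurableSet {y : Rd d | 2 ^ k * R < dist x y ∧ dist x y ≤ 2 ^ (k + 1) * R} :=
    fun k => gm_meas_ann _ _ _
  calc _ ≤ ∫⁻ y in ⋃ k : ℕ, {y | 2 ^ k * R < dist x y ∧ dist x y ≤ 2 ^ (k + 1) * R}, w y * F y :=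
        lintegral_mono_set hsub
    _ ≤ ∑' k : ℕ, ∫⁻ y in {y | 2 ^ k * R < dist x y ∧ dist x y ≤ 2 ^ (k + 1) * R}, w y * F y :=
        lintegral_iUnion_le _ _
    _ ≤ _ := by
        refine ENNReal.tsum_le_tsum fun k => ?_
        calc _ ≤ ∫⁻ y in {y | 2 ^ k * R < dist x y ∧ dist x y ≤ 2 ^ (k + 1) * R}, W k * F y := by
              refine setLIntegral_mono' (hmeas k) fun y hy => ?_
              gcongr
              exact hw k y hy.1 hy.2
          _ = W k * ∫⁻ y in {y | 2 ^ k * R < dist x y ∧ dist x y ≤ 2 ^ (k + 1) * R}, F y :=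
              lintegral_const_mul _ hFm
          _ ≤ W k * ∫⁻ y in Metric.closedBall x (2 ^ (k + 1) * R), F y := by
              gcongr
              intro y hy
              rw [Metric.mem_closedBall, dist_comm]; exact hy.2
          _ ≤ _ := by
              gcongr
              exact hF _ (by positivity)

/-- Power decay: `b > d`. -/
lemma gm_power (d : ℕ) (b A : ℝ) (hb : (d : ℝ) < b) (hA : 0 < A) :
    ∃ C : ℝ, 0 < C ∧ ∀ (x : Rd d) (F : Rd d → ℝ≥0∞), Measurable F → ∀ (R : ℝ), 0 < R → ∀ m : ℝ≥0∞,
      (∀ t : ℝ, 0 < t → ∫⁻ y in Metric.closedBall x t, F y ≤ ENNReal.ofReal (A * t ^ d) * m) →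
      ∫⁻ y in {y | R < dist x y}, ENNReal.ofReal (dist x y ^ (-b)) * F y ≤
        ENNReal.ofReal (C * R ^ ((d : ℝ) - b)) * m := by
  have hq1 : (2 : ℝ) ^ ((d : ℝ) - b) < 1 :=
    Real.rpow_lt_one_of_one_lt_of_neg one_lt_two (by linarith)
  have hq0 : (0 : ℝ) < (2 : ℝ) ^ ((d : ℝ) - b) := by positivity
  refine ⟨A * 2 ^ d * (1 - (2 : ℝ) ^ ((d : ℝ) - b))⁻¹, ?_, ?_⟩
  · have : 0 < 1 - (2 : ℝ) ^ ((d : ℝ) - b) := by linarith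
    positivity
  intro x F hFm R hR m hF
  refine (gm_annuli x F hFm hR m hF (fun y => ENNReal.ofReal (dist x y ^ (-b)))
    (fun k => ENNReal.ofReal ((2 ^ k * R) ^ (-b))) ?_).trans ?_
  · intro k y h1 h2
    refine ENNReal.ofReal_le_ofReal ?_
    have hb0 : 0 ≤ b := le_trans (Nat.cast_nonneg d) hb.le
    exact Real.rpow_le_rpow_of_nonpos (by positivity) h1.le (by linarith)
  · have : ∀ k : ℕ, ENNReal.ofReal ((2 ^ k * R) ^ (-b)) *
        (ENNReal.ofReal (A * (2 ^ (k + 1) * R) ^ d) * m) =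
        ENNReal.ofReal (A * 2 ^ d * R ^ ((d : ℝ) - b) * ((2 : ℝ) ^ ((d : ℝ) - b)) ^ k) * m := by
      intro k
      rw [← mul_assoc, ← ENNReal.ofReal_mul (by positivity)]
      congr 2
      have e1 : (2 ^ (k + 1) * R) ^ d = 2 ^ d * (2 ^ k * R) ^ (d : ℝ) := by
        rw [Real.rpow_natCast, ← mul_pow]; ring
      have e2 : ((2 : ℝ) ^ ((d : ℝ) - b)) ^ k * R ^ ((d : ℝ) - b) = (2 ^ k * R) ^ ((d : ℝ) - b) := by
        rw [Real.mul_rpow (by positivity) hR.le]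
        congr 1
        rw [← Real.rpow_natCast, ← Real.rpow_mul (by norm_num), mul_comm, Real.rpow_mul (by norm_num),
          Real.rpow_natCast]
      rw [e1, mul_assoc (A * 2 ^ d), mul_comm (R ^ _), e2, sub_eq_add_neg,
        Real.rpow_add (by positivity)]
      ring
    simp_rw [this]
    rw [ENNReal.tsum_mul_right, ← ENNReal.ofReal_tsum_of_nonneg (fun n => by positivity)
      ((summable_geometric_of_lt_one hq0.le hq1).mul_left _), tsum_mul_left,
      tsum_geometric_of_lt_one hq0.le hq1]
    apply le_of_eq
    congr 2; ring

lemma gm_dini {d : ℕ} (S : CZO d) :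
    ∃ C : ℝ, 0 < C ∧ ∑' k : ℕ, ENNReal.ofReal (S.ω ((2 : ℝ)⁻¹ ^ (k + 1))) ≤ ENNReal.ofReal C := by
  have hfin : ∫⁻ t in Ioo (0 : ℝ) 1, ENNReal.ofReal (S.ω t / t) ≠ ⊤ := by
    have h := S.dini.2
    have h2 : ∫⁻ t in Ioo (0 : ℝ) 1, ENNReal.ofReal (S.ω t / t) ≤
        ∫⁻ t in Ioo (0 : ℝ) 1, ‖S.ω t / t‖ₑ :=
      lintegral_mono fun t => by
        rw [Real.enorm_eq_ofReal_abs]; exact ENNReal.ofReal_le_ofReal (le_abs_self _)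
    exact (h2.trans_lt h).ne
  have hanti : Antitone (fun k : ℕ => (2 : ℝ)⁻¹ ^ k) :=
    fun a b hab => pow_le_pow_of_le_one (by norm_num) (by norm_num) hab
  have key : ∑' k : ℕ, ENNReal.ofReal (S.ω ((2 : ℝ)⁻¹ ^ (k + 1))) ≤
      2 * ∫⁻ t in Ioo (0 : ℝ) 1, ENNReal.ofReal (S.ω t / t) := by
    have h1 : ∀ k : ℕ, ENNReal.ofReal (S.ω ((2 : ℝ)⁻¹ ^ (k + 1))) ≤
        2 * ∫⁻ t in Ico ((2 : ℝ)⁻¹ ^ (k + 1)) ((2 : ℝ)⁻¹ ^ k) \ {1}, ENNReal.ofReal (S.ω t / t) := by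
      intro k
      have hpos : (0 : ℝ) < (2 : ℝ)⁻¹ ^ (k + 1) := by positivity
      have hpos' : (0 : ℝ) < (2 : ℝ)⁻¹ ^ k := by positivity
      have hw : 0 ≤ S.ω ((2 : ℝ)⁻¹ ^ (k + 1)) := by
        rw [← S.ω_zero]; exact S.ω_mono (by simp) (by simp) hpos.le
      calc _ = 2 * ∫⁻ t in Ico ((2 : ℝ)⁻¹ ^ (k + 1)) ((2 : ℝ)⁻¹ ^ k) \ {1},
              ENNReal.ofReal (S.ω ((2 : ℝ)⁻¹ ^ (k + 1)) / (2 : ℝ)⁻¹ ^ k) := by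
            rw [setLIntegral_const, measure_sdiff_null (by simp), Real.volume_Ico,
              ← ENNReal.ofReal_mul (by positivity),
              show (2 : ℝ≥0∞) = ENNReal.ofReal 2 by simp, ← ENNReal.ofReal_mul (by positivity)]
            congr 1
            field_simp
            ring
        _ ≤ _ := by
            gcongr 2 * ?_
            refine setLIntegral_mono' (measurableSet_Ico.diff (by simp)) fun t ht => ?_
            refine ENNReal.ofReal_le_ofReal ?_
            have ht0 : 0 < t := hpos.trans_le ht.1.1
            have := S.ω_mono (a := (2 : ℝ)⁻¹ ^ (k + 1)) (b := t) (by simp)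
              ht0.le ht.1.1
            exact div_le_div₀ (hw.trans this) this ht0 ht.1.2.le
    calc _ ≤ _ := ENNReal.tsum_le_tsum h1
      _ = 2 * ∑' k : ℕ, ∫⁻ t in Ico ((2 : ℝ)⁻¹ ^ (k + 1)) ((2 : ℝ)⁻¹ ^ k) \ {1},
          ENNReal.ofReal (S.ω t / t) := ENNReal.tsum_mul_left
      _ = 2 * ∫⁻ t in ⋃ k : ℕ, Ico ((2 : ℝ)⁻¹ ^ (k + 1)) ((2 : ℝ)⁻¹ ^ k) \ {1},
          ENNReal.ofReal (S.ω t / t) := by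
            rw [lintegral_iUnion (fun k => measurableSet_Ico.diff (by simp))]
            intro i j hij
            exact (hanti.pairwise_disjoint_on_Ico_succ hij).mono sdiff_subset sdiff_subset
      _ ≤ _ := by
            gcongr 2 * ?_
            refine lintegral_mono_set ?_
            refine iUnion_subset fun k t ht => ⟨lt_of_lt_of_le (by positivity) ht.1.1, ?_⟩
            exact ht.1.2.trans_le (pow_le_one₀ (by norm_num) (by norm_num))
  have hne : 2 * ∫⁻ t in Ioo (0 : ℝ) 1, ENNReal.ofReal (S.ω t / t) ≠ ⊤ :=
    ENNReal.mul_ne_top (by simp) hfin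
  refine ⟨(2 * ∫⁻ t in Ioo (0 : ℝ) 1, ENNReal.ofReal (S.ω t / t)).toReal + 1, by positivity, ?_⟩
  refine key.trans ?_
  rw [ENNReal.le_ofReal_iff_toReal_le hne (by positivity)]
  linarith

lemma gm_vol (d : ℕ) : ∃ c : ℝ, 0 < c ∧ ∀ (x : Rd d) (t : ℝ), 0 < t →
    volume (Metric.ball x t) = ENNReal.ofReal (c * t ^ d) ∧
    volume (Metric.closedBall x t) = ENNReal.ofReal (c * t ^ d) := by
  have hfin : volume (Metric.ball (0 : Rd d) 1) ≠ ⊤ := measure_ball_lt_top.ne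
  have hpos : 0 < volume (Metric.ball (0 : Rd d) 1) := Metric.measure_ball_pos _ _ one_pos
  refine ⟨(volume (Metric.ball (0 : Rd d) 1)).toReal, ENNReal.toReal_pos hpos.ne' hfin, ?_⟩
  intro x t ht
  have e : ENNReal.ofReal ((volume (Metric.ball (0 : Rd d) 1)).toReal * t ^ d) =
      ENNReal.ofReal (t ^ Module.finrank ℝ (Rd d)) * volume (Metric.ball (0 : Rd d) 1) := by
    rw [finrank_euclideanSpace_fin, mul_comm, ENNReal.ofReal_mul (by positivity),
      ENNReal.ofReal_toReal hfin]
  rw [e]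
  exact ⟨Measure.addHaar_ball_of_pos _ _ ht, Measure.addHaar_closedBall _ _ ht.le⟩

lemma gm_ball_r {d : ℕ} (f : Rd d → ℝ) (r : ℝ) (hr : 0 ≤ r) (x : Rd d) (t : ℝ) (ht : 0 < t) :
    ∫⁻ y in Metric.closedBall x t, ‖f y‖ₑ ^ r ≤
      ENNReal.ofReal (4 ^ d * t ^ d) * maxCube (fun y => |f y| ^ r) x := by
  let Q : Cube d := ⟨fun i => x i, 4 * t, by positivity⟩
  have hx : x ∈ Q.set := by
    intro i
    simp only [Q]
    constructor <;> linarith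
  have hsub : Metric.closedBall x t ⊆ Q.set := by
    intro y hy i
    rw [Metric.mem_closedBall, dist_eq_norm] at hy
    have h1 := (PiLp.norm_apply_le (y - x) i).trans hy
    rw [Real.norm_eq_abs, PiLp.sub_apply, abs_le] at h1
    simp only [Q]
    constructor <;> linarith [h1.1, h1.2]
  have hM : Q.vol⁻¹ * ∫⁻ y in Q.set, ENNReal.ofReal |(|f y| ^ r)| ≤
      maxCube (fun y => |f y| ^ r) x :=
    le_iSup₂ (f := fun (Q : Cube d) (_ : x ∈ Q.set) =>
      Q.vol⁻¹ * ∫⁻ y in Q.set, ENNReal.ofReal |(|f y| ^ r)|) Q hx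
  have hv : Q.vol = ENNReal.ofReal (4 ^ d * t ^ d) := by
    unfold Cube.vol
    rw [mul_pow]
  have hv0 : Q.vol ≠ 0 := by
    rw [hv, ← pos_iff_ne_zero, ENNReal.ofReal_pos]; positivity
  have hvt : Q.vol ≠ ⊤ := ENNReal.ofReal_ne_top
  calc ∫⁻ y in Metric.closedBall x t, ‖f y‖ₑ ^ r ≤ ∫⁻ y in Q.set, ‖f y‖ₑ ^ r :=
        lintegral_mono_set hsub
    _ = ∫⁻ y in Q.set, ENNReal.ofReal |(|f y| ^ r)| := by
        congr 1; ext y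
        rw [abs_of_nonneg (by positivity), Real.enorm_eq_ofReal_abs,
          ENNReal.ofReal_rpow_of_nonneg (abs_nonneg _) hr]
    _ = Q.vol * (Q.vol⁻¹ * ∫⁻ y in Q.set, ENNReal.ofReal |(|f y| ^ r)|) := by
        rw [← mul_assoc, ENNReal.mul_inv_cancel hv0 hvt, one_mul]
    _ ≤ _ := by
        rw [← hv]; gcongr

lemma gm_ball_one (d : ℕ) {r : ℝ} (hr : 1 < r) :
    ∃ A : ℝ, 0 < A ∧ ∀ (f : Rd d → ℝ), Measurable f → ∀ (x : Rd d) (t : ℝ), 0 < t →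
      ∫⁻ y in Metric.closedBall x t, ‖f y‖ₑ ≤
        ENNReal.ofReal (A * t ^ d) * maxCube (fun y => |f y| ^ r) x ^ (1 / r) := by
  obtain ⟨c, hc, hvol⟩ := gm_vol d
  have hpq : r.HolderConjugate (r / (r - 1)) := Real.HolderConjugate.conjExponent hr
  have hr0 : 0 < r := by linarith
  have hr' := hpq.symm.pos
  have hsum : 1 / r + 1 / (r / (r - 1)) = 1 := by
    have := hpq.inv_add_inv_eq_one
    simpa [one_div] using this
  set r' := r / (r - 1)
  refine ⟨(4 ^ d : ℝ) ^ (1 / r) * c ^ (1 / r'), by positivity, ?_⟩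
  intro f hf x t ht
  have hH := ENNReal.lintegral_mul_le_Lp_mul_Lq (volume.restrict (Metric.closedBall x t)) hpq
    (f := fun y => ‖f y‖ₑ) (g := fun _ => 1) (by fun_prop) (by fun_prop)
  simp only [Pi.mul_apply, mul_one, ENNReal.one_rpow, lintegral_const, one_mul,
    Measure.restrict_apply MeasurableSet.univ, univ_inter] at hH
  refine hH.trans ?_
  have h1 := gm_ball_r f r hr0.le x t ht
  calc _ ≤ (ENNReal.ofReal (4 ^ d * t ^ d) * maxCube (fun y => |f y| ^ r) x) ^ (1 / r) *
        ENNReal.ofReal (c * t ^ d) ^ (1 / r') := by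
        gcongr
        exact (hvol x t ht).2.le
    _ = ENNReal.ofReal ((4 ^ d * t ^ d) ^ (1 / r) * (c * t ^ d) ^ (1 / r')) *
        maxCube (fun y => |f y| ^ r) x ^ (1 / r) := by
        rw [ENNReal.mul_rpow_of_nonneg _ _ (by positivity),
          ENNReal.ofReal_rpow_of_nonneg (by positivity) (by positivity),
          ENNReal.ofReal_rpow_of_nonneg (by positivity) (by positivity),
          ENNReal.ofReal_mul (by positivity)]
        ring
    _ ≤ _ := by
        apply le_of_eq
        congr 2
        rw [Real.mul_rpow (by positivity) (by positivity),
          Real.mul_rpow (by positivity) (by positivity)]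
        have : (t ^ d) ^ (1 / r) * (t ^ d) ^ (1 / r') = t ^ d := by
          rw [← Real.rpow_add (by positivity), hsum, Real.rpow_one]
        calc _ = (4 ^ d : ℝ) ^ (1 / r) * c ^ (1 / r') * ((t ^ d) ^ (1 / r) * (t ^ d) ^ (1 / r')) := by
              ring
          _ = _ := by rw [this]

lemma gm_shell (d : ℕ) (hd : 0 < d) :
    ∃ A : ℝ, 0 < A ∧ ∀ (x : Rd d) (a δ : ℝ), 0 < a → 0 ≤ δ → 2 * δ ≤ a →
      ∫⁻ y in {y | a ≤ dist x y ∧ dist x y ≤ a + 2 * δ},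
        ENNReal.ofReal (dist x y ^ (-((d : ℝ) - 1))) ≤ ENNReal.ofReal (A * δ) := by
  obtain ⟨c, hc, hvol⟩ := gm_vol d
  obtain ⟨n, rfl⟩ : ∃ n, d = n + 1 := ⟨d - 1, by omega⟩
  refine ⟨c * (2 * (n + 1) * 2 ^ n), by positivity, ?_⟩
  intro x a δ ha hδ hδa
  have hvolE : volume {y : Rd (n + 1) | a ≤ dist x y ∧ dist x y ≤ a + 2 * δ} ≤
      ENNReal.ofReal (c * (2 * δ * (n + 1) * (2 * a) ^ n)) := by
    have hsub : {y : Rd (n + 1) | a ≤ dist x y ∧ dist x y ≤ a + 2 * δ} ⊆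
        Metric.closedBall x (a + 2 * δ) \ Metric.ball x a := by
      intro y hy
      refine ⟨?_, ?_⟩
      · rw [Metric.mem_closedBall, dist_comm]; exact hy.2
      · rw [Metric.mem_ball, dist_comm]; exact not_lt.2 hy.1
    refine (measure_mono hsub).trans ?_
    rw [measure_sdiff (Metric.ball_subset_closedBall.trans
      (Metric.closedBall_subset_closedBall (by linarith))) measurableSet_ball.nullMeasurableSet
      (by rw [(hvol x a ha).1]; simp), (hvol x a ha).1, (hvol x _ (by linarith)).2,
      ← ENNReal.ofReal_sub _ (by positivity)]
    refine ENNReal.ofReal_le_ofReal ?_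
    rw [← mul_sub]
    gcongr
    have h := abs_pow_sub_pow_le (a + 2 * δ) a (n + 1)
    have h2 := (le_abs_self _).trans h
    have e1 : a + 2 * δ - a = 2 * δ := by ring
    rw [e1, abs_of_nonneg (by linarith : (0 : ℝ) ≤ 2 * δ),
      abs_of_nonneg (by linarith : (0 : ℝ) ≤ a + 2 * δ),
      abs_of_nonneg ha.le, max_eq_left (by linarith)] at h2
    refine h2.trans ?_
    push_cast
    gcongr
    linarith
  have hmE : MeasurableSet {y : Rd (n + 1) | a ≤ dist x y ∧ dist x y ≤ a + 2 * δ} := by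
    have h : Measurable fun y : Rd (n + 1) => dist x y := by fun_prop
    exact h (measurableSet_Icc (a := a) (b := a + 2 * δ))
  calc _ ≤ ∫⁻ y in {y : Rd (n + 1) | a ≤ dist x y ∧ dist x y ≤ a + 2 * δ},
        ENNReal.ofReal ((a ^ n)⁻¹) := by
        refine setLIntegral_mono' hmE fun y hy => ENNReal.ofReal_le_ofReal ?_
        have e : -(((n + 1 : ℕ) : ℝ) - 1) = -(n : ℝ) := by push_cast; ring
        rw [e, ← Real.rpow_natCast a n, ← Real.rpow_neg ha.le]
        exact Real.rpow_le_rpow_of_nonpos ha hy.1 (by simp)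
    _ ≤ ENNReal.ofReal ((a ^ n)⁻¹) * ENNReal.ofReal (c * (2 * δ * (n + 1) * (2 * a) ^ n)) := by
        rw [setLIntegral_const]
        gcongr
    _ = _ := by
        rw [← ENNReal.ofReal_mul (by positivity)]
        congr 1
        rw [mul_pow]
        field_simp

lemma gm_integrable {d : ℕ} (hd : 0 < d) (S : CZO d) {q : ℝ} (hq : 1 < q) (f : Rd d → ℝ)
    (hf : Measurable f) (hfq : (∫⁻ x, ENNReal.ofReal |f x| ^ q ∂volume) ≠ ⊤) (x : Rd d)
    {ε : ℝ} (hε : 0 < ε) : IntegrableOn (fun y => S.K x y * f y) {y | ε < dist x y} := by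
  obtain ⟨c, hc, hvol⟩ := gm_vol d
  have hpq : q.HolderConjugate (q / (q - 1)) := Real.HolderConjugate.conjExponent hq
  have hp1 : 1 < q / (q - 1) := hpq.symm.lt
  set p := q / (q - 1)
  have hp0 : 0 < p := by linarith
  have hKm : Measurable (S.K x) := S.measK.of_uncurry_left
  have hd' : (0 : ℝ) < d := by exact_mod_cast hd
  obtain ⟨C, hC, hpow⟩ := gm_power d (d * p) c (by nlinarith) hc
  have hE := gm_meas_gt x ε
  refine ⟨(hKm.mul hf).aestronglyMeasurable, ?_⟩
  have hH := ENNReal.lintegral_mul_le_Lp_mul_Lq (volume.restrict {y | ε < dist x y}) hpq.symm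
    (f := fun y => ‖S.K x y‖ₑ) (g := fun y => ‖f y‖ₑ) (by fun_prop) (by fun_prop)
  simp only [Pi.mul_apply] at hH
  have hK : ∫⁻ y in {y | ε < dist x y}, ‖S.K x y‖ₑ ^ p ≠ ⊤ := by
    have := hpow x (fun _ => ENNReal.ofReal (S.Cst ^ p)) measurable_const ε hε
      (ENNReal.ofReal (S.Cst ^ p)) (fun t ht => by
        rw [setLIntegral_const, (hvol x t ht).2, mul_comm])
    refine ne_top_of_le_ne_top ?_ (le_trans ?_ this)
    · exact ENNReal.mul_ne_top (by simp) (by simp)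
    · refine setLIntegral_mono' hE fun y hy => ?_
      have hy0 : 0 < dist x y := hε.trans hy
      have := S.size x y (dist_pos.1 hy0)
      rw [Real.enorm_eq_ofReal_abs, ENNReal.ofReal_rpow_of_nonneg (abs_nonneg _) hp0.le,
        ← ENNReal.ofReal_mul (by positivity)]
      refine ENNReal.ofReal_le_ofReal ?_
      refine (Real.rpow_le_rpow (abs_nonneg _) this hp0.le).trans (le_of_eq ?_)
      rw [Real.div_rpow S.hCst.le (by positivity), ← Real.rpow_natCast, ← Real.rpow_mul hy0.le,
        Real.rpow_neg hy0.le]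
      field_simp
  have hF : ∫⁻ y in {y | ε < dist x y}, ‖f y‖ₑ ^ q ≠ ⊤ := by
    refine ne_top_of_le_ne_top hfq (le_trans (setLIntegral_le_lintegral _ _) ?_)
    simp only [Real.enorm_eq_ofReal_abs]
    exact le_rfl
  rw [HasFiniteIntegral]
  simp only [enorm_mul]
  refine hH.trans_lt (ENNReal.mul_lt_top ?_ ?_)
  · exact ENNReal.rpow_lt_top_of_nonneg (by positivity) hK
  · exact ENNReal.rpow_lt_top_of_nonneg (by positivity) hF

lemma gm_trunc_sub {d : ℕ} (hd : 0 < d) (S : CZO d) {q : ℝ} (hq : 1 < q) (f : Rd d → ℝ)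
    (hf : Measurable f) (hfq : (∫⁻ x, ENNReal.ofReal |f x| ^ q ∂volume) ≠ ⊤) (x : Rd d)
    {a b : ℝ} (ha : 0 < a) (hab : a ≤ b) :
    S.trunc a f x - S.trunc b f x = ∫ y in {y | a < dist x y ∧ dist x y ≤ b}, S.K x y * f y := by
  have hi := gm_integrable hd S hq f hf hfq x ha
  have hu : {y : Rd d | a < dist x y} =
      {y | a < dist x y ∧ dist x y ≤ b} ∪ {y | b < dist x y} := by
    ext y
    simp only [mem_ofPred_eq, mem_union]
    constructor
    · intro h; by_cases h' : dist x y ≤ b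
      · exact Or.inl ⟨h, h'⟩
      · exact Or.inr (not_le.1 h')
    · rintro (h | h)
      · exact h.1
      · exact hab.trans_lt h
  unfold CZO.trunc
  rw [hu] at hi ⊢
  rw [setIntegral_union _ (gm_meas_gt _ _) (hi.mono_set subset_union_left)
    (hi.mono_set subset_union_right)]
  · ring
  · rw [Set.disjoint_left]
    intro y h1 h2
    exact absurd h2 (not_lt.2 h1.2)

lemma gm_clip {d : ℕ} (S : CZO d) (ρ : ℝ) (hρ : 0 < ρ) (f : Rd d → ℝ) (x : Rd d)
    {R R0 : ℝ} (hR : 0 < R) (hR0 : R < R0) (ε : ℕ → ℝ) (hε : StrictAnti ε) (hpos : ∀ i, 0 < ε i)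
    (hlim : Tendsto ε atTop (nhds 0)) :
    (∑' i, ‖S.trunc (max R (min R0 (ε (i + 1)))) f x - S.trunc (max R (min R0 (ε i))) f x‖ₑ ^ ρ)
      ^ (1 / ρ) ≤ S.var ρ f x := by
  set η : ℕ → ℝ := fun i =>
    if R0 ≤ ε i then (if ε (i + 1) < R0 then R0 else ε i)
    else if ε i ≤ R ∧ ∃ j, i = j + 1 ∧ R < ε j then R else ε i with hη
  have hs : StrictAnti η := by
    refine strictAnti_nat_of_succ_lt fun i => ?_
    have h1 := hε (Nat.lt_succ_self i)
    have h2 := hε (Nat.lt_succ_self (i + 1))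
    simp only [Nat.succ_eq_add_one] at h1 h2
    simp only [hη]
    have e1 : (∃ j, i + 1 = j + 1 ∧ R < ε j) ↔ R < ε i := by
      constructor
      · rintro ⟨j, hj, h⟩
        have : i = j := by omega
        rwa [this]
      · intro h; exact ⟨i, rfl, h⟩
    simp only [e1]
    split_ifs with a1 a2 a3 a4 a5 a6 a7 a8 a9 <;> linarith
  have hp : ∀ i, 0 < η i := by
    intro i
    simp only [hη]
    have := hpos i
    split_ifs <;> linarith
  have hl : Tendsto η atTop (nhds 0) := by
    refine hlim.congr' ?_
    have hev := (hlim.eventually (gt_mem_nhds hR))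
    filter_upwards [(tendsto_sub_atTop_nat 1).eventually hev, hev, eventually_ge_atTop 1]
      with i hi1 hi hi2
    simp only [hη]
    rw [if_neg (by linarith), if_neg]
    rintro ⟨_, j, rfl, hj⟩
    simp at hi1
    linarith
  refine le_trans ?_ (le_iSup₂ (f := fun (ε : ℕ → ℝ)
    (_ : StrictAnti ε ∧ (∀ i, 0 < ε i) ∧ Tendsto ε atTop (nhds 0)) =>
    (∑' i : ℕ, ENNReal.ofReal |S.trunc (ε (i + 1)) f x - S.trunc (ε i) f x| ^ ρ) ^ (1 / ρ))
    η ⟨hs, hp, hl⟩)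
  gcongr with i
  rw [← Real.enorm_eq_ofReal_abs]
  have h1 := hε (Nat.lt_succ_self i)
  simp only [Nat.succ_eq_add_one] at h1
  by_cases c1 : ε i ≤ R
  · rw [max_eq_left ((min_le_right R0 (ε i)).trans c1),
      max_eq_left ((min_le_right R0 (ε (i + 1))).trans (h1.le.trans c1))]
    simp
  by_cases c2 : R0 ≤ ε (i + 1)
  · rw [min_eq_left c2, min_eq_left (c2.trans h1.le)]
    simp
  push Not at c1 c2
  have e1 : η (i + 1) = max R (min R0 (ε (i + 1))) := by
    simp only [hη]
    rw [if_neg (by linarith), min_eq_right c2.le]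
    by_cases c3 : ε (i + 1) ≤ R
    · rw [if_pos ⟨c3, i, rfl, c1⟩, max_eq_left c3]
    · rw [if_neg (fun h => c3 h.1), max_eq_right (by linarith)]
  have e2 : η i = max R (min R0 (ε i)) := by
    simp only [hη]
    by_cases c3 : R0 ≤ ε i
    · rw [if_pos c3, if_pos c2, min_eq_left c3, max_eq_right hR0.le]
    · rw [if_neg c3, if_neg (fun h => absurd h.1 (by linarith)), min_eq_right (by linarith),
        max_eq_right c1.le]
  rw [e1, e2]

def gmAnn {d : ℕ} (z : Rd d) (ε : ℕ → ℝ) (i : ℕ) : Set (Rd d) :=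
  {y | ε (i + 1) < dist z y ∧ dist z y ≤ ε i}

lemma gmAnn_meas {d : ℕ} (z : Rd d) (ε : ℕ → ℝ) (i : ℕ) : MeasurableSet (gmAnn z ε i) :=
  gm_meas_ann _ _ _

lemma gm_sum_ann {d : ℕ} (z : Rd d) (ε : ℕ → ℝ) (hε : Antitone ε) (E : Set (Rd d))
    (hE : MeasurableSet E) (h : Rd d → ℝ≥0∞) :
    ∑' i, ∫⁻ y in gmAnn z ε i ∩ E, h y ≤ ∫⁻ y in E, h y := by
  rw [← lintegral_iUnion (fun i => (gmAnn_meas z ε i).inter hE)]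
  · exact lintegral_mono_set (iUnion_subset fun i => inter_subset_right)
  · intro i j hij
    have h1 := hε.pairwise_disjoint_on_Ioc_succ hij
    refine Disjoint.mono inter_subset_left inter_subset_left ?_
    simp only [Function.onFun] at h1
    rw [Set.disjoint_left] at h1 ⊢
    intro y hy hy'
    exact h1 (a := dist z y) hy hy'

lemma gm_E2 {d : ℕ} (S : CZO d) {r : ℝ} (hr : 1 < r) :
    ∃ C : ℝ, 0 < C ∧ ∀ (f : Rd d → ℝ), Measurable f → ∀ (x ξ : Rd d) (R : ℝ), 0 < R →
      2 * dist x ξ ≤ R →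
      ∫⁻ y in {y | R < dist x y}, ‖S.K ξ y - S.K x y‖ₑ * ‖f y‖ₑ ≤
        ENNReal.ofReal C * maxCube (fun y => |f y| ^ r) x ^ (1 / r) := by
  obtain ⟨A, hA, hball⟩ := gm_ball_one d hr
  obtain ⟨B, hB, hdini⟩ := gm_dini S
  have hCst := S.hCst
  refine ⟨S.Cst * A * 2 ^ d * B, by positivity, ?_⟩
  intro f hf x ξ R hR hδ
  set D := maxCube (fun y => |f y| ^ r) x ^ (1 / r)
  have hω : ∀ s, 0 ≤ s → 0 ≤ S.ω s := fun s hs => by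
    rw [← S.ω_zero]; exact S.ω_mono (by simp) hs hs
  refine (gm_annuli x (fun y => ‖f y‖ₑ) (by fun_prop) hR D (fun t ht => hball f hf x t ht)
    (fun y => ‖S.K ξ y - S.K x y‖ₑ)
    (fun k => ENNReal.ofReal (S.Cst * S.ω ((2 : ℝ)⁻¹ ^ (k + 1)) / (2 ^ k * R) ^ d)) ?_).trans ?_
  · intro k y h1 h2
    have hk : (1 : ℝ) ≤ 2 ^ k := one_le_pow₀ (by norm_num)
    have hRk : R ≤ 2 ^ k * R := by nlinarith
    have hy : 0 < dist x y := by linarith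
    have hs := S.smooth x ξ y (dist_pos.1 hy) (by linarith)
    have h3 : |S.K x y - S.K ξ y| ≤ S.Cst * S.ω (dist x ξ / dist x y) / dist x y ^ d := by
      have := abs_nonneg (S.K y x - S.K y ξ)
      linarith
    rw [Real.enorm_eq_ofReal_abs, abs_sub_comm]
    refine ENNReal.ofReal_le_ofReal (h3.trans ?_)
    have h4 : dist x ξ / dist x y ≤ (2 : ℝ)⁻¹ ^ (k + 1) := by
      rw [inv_pow, div_le_iff₀ hy, pow_succ]
      have : 2 ^ k * (2 * dist x ξ) ≤ 2 ^ k * R := by gcongr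
      rw [inv_mul_eq_div, le_div_iff₀ (by positivity)]
      nlinarith
    have h5 : 0 ≤ dist x ξ / dist x y := by positivity
    have h6 := S.ω_mono (a := dist x ξ / dist x y) (b := (2 : ℝ)⁻¹ ^ (k + 1)) h5
      (h5.trans h4) h4
    have h7 := hω _ (h5.trans h4)
    gcongr
  · have : ∀ k : ℕ, ENNReal.ofReal (S.Cst * S.ω ((2 : ℝ)⁻¹ ^ (k + 1)) / (2 ^ k * R) ^ d) *
        (ENNReal.ofReal (A * (2 ^ (k + 1) * R) ^ d) * D) =
        ENNReal.ofReal (S.Cst * A * 2 ^ d) * D * ENNReal.ofReal (S.ω ((2 : ℝ)⁻¹ ^ (k + 1))) := by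
      intro k
      have h7 := hω ((2 : ℝ)⁻¹ ^ (k + 1)) (by positivity)
      rw [← mul_assoc, ← ENNReal.ofReal_mul (by positivity), mul_right_comm,
        ← ENNReal.ofReal_mul (by positivity)]
      congr 2
      have : (2 ^ (k + 1) * R) ^ d = 2 ^ d * (2 ^ k * R) ^ d := by rw [← mul_pow]; ring
      rw [this]
      field_simp
    simp_rw [this]
    rw [ENNReal.tsum_mul_left, ENNReal.ofReal_mul (by positivity : 0 ≤ S.Cst * A * 2 ^ d)]
    calc _ ≤ ENNReal.ofReal (S.Cst * A * 2 ^ d) * D * ENNReal.ofReal B := by gcongr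
      _ = _ := by ring

lemma gm_E3 {d : ℕ} (hd : 0 < d) (S : CZO d) {r : ℝ} (hr : 1 < r) :
    ∃ C : ℝ, 0 < C ∧ ∀ (f : Rd d → ℝ), Measurable f → ∀ (x ξ : Rd d) (R : ℝ), 0 < R →
      2 * dist x ξ ≤ R → ∀ ε : ℕ → ℝ, Antitone ε →
      (∑' i, (∫⁻ y in {y | R < dist x y ∧ ¬ (y ∈ gmAnn ξ ε i ↔ y ∈ gmAnn x ε i)},
        ‖S.K ξ y‖ₑ * ‖f y‖ₑ) ^ r) ^ (1 / r) ≤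
        ENNReal.ofReal C * maxCube (fun y => |f y| ^ r) x ^ (1 / r) := by
  have hpq : r.HolderConjugate (r / (r - 1)) := Real.HolderConjugate.conjExponent hr
  have hr0 : 0 < r := by linarith
  have hr1 : 0 < r - 1 := by linarith
  have hr' := hpq.symm.pos
  have hdiv : 1 / (r / (r - 1)) * r = r - 1 := by field_simp
  have hr'eq : 1 / (r / (r - 1)) = (r - 1) / r := by field_simp
  set r' := r / (r - 1)
  obtain ⟨A, hA, hshell⟩ := gm_shell d hd
  obtain ⟨C, hC, hpow⟩ := gm_power d (r + d - 1) (4 ^ d) (by linarith) (by positivity)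
  have hCst := S.hCst
  set k := S.Cst * 2 ^ d with hk
  have hk0 : 0 < k := by positivity
  refine ⟨(k ^ r * (2 * A) ^ (r - 1) * (2 * C)) ^ (1 / r), by positivity, ?_⟩
  intro f hf x ξ R hR hδ ε hε
  set M := maxCube (fun y => |f y| ^ r) x
  set δ := dist x ξ with hδdef
  have hδ0 : 0 ≤ δ := dist_nonneg
  have hKm : Measurable (S.K ξ) := S.measK.of_uncurry_left
  have hdm : Measurable fun y : Rd d => dist x y := by fun_prop
  set a : ℝ := ((d : ℝ) - 1) / r' with ha
  set E : ℕ → Set (Rd d) := fun i => {y | R < dist x y ∧ ¬ (y ∈ gmAnn ξ ε i ↔ y ∈ gmAnn x ε i)}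
    with hEdef
  have hEm : ∀ i, MeasurableSet (E i) := fun i => by
    have h1 := gmAnn_meas ξ ε i
    have h2 := gmAnn_meas x ε i
    have : E i = {y | R < dist x y} ∩ ((gmAnn ξ ε i \ gmAnn x ε i) ∪ (gmAnn x ε i \ gmAnn ξ ε i)) := by
      ext y
      simp only [hEdef, mem_ofPred_eq, mem_inter_iff, mem_union, Set.mem_sdiff]
      tauto
    rw [this]
    exact (gm_meas_gt x R).inter ((h1.diff h2).union (h2.diff h1))
  set w : Rd d → ℝ≥0∞ := fun y => ENNReal.ofReal (dist x y ^ (-(r + d - 1))) * ‖f y‖ₑ ^ r with hw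
  -- thin shells
  have hthin : ∀ i, ∫⁻ y in E i, ENNReal.ofReal (dist x y ^ (-((d : ℝ) - 1))) ≤
      ENNReal.ofReal (2 * A * R) := by
    intro i
    have hsh : ∀ t : ℝ, ∫⁻ y in {y | max R (t - δ) ≤ dist x y ∧ dist x y ≤ max R (t - δ) + 2 * δ},
        ENNReal.ofReal (dist x y ^ (-((d : ℝ) - 1))) ≤ ENNReal.ofReal (A * R) := fun t =>
      (hshell x (max R (t - δ)) δ (hR.trans_le (le_max_left _ _)) hδ0
        (hδ.trans (le_max_left _ _))).trans (ENNReal.ofReal_le_ofReal (by gcongr; linarith))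
    have hsub : E i ⊆
        {y | max R (ε i - δ) ≤ dist x y ∧ dist x y ≤ max R (ε i - δ) + 2 * δ} ∪
        {y | max R (ε (i + 1) - δ) ≤ dist x y ∧ dist x y ≤ max R (ε (i + 1) - δ) + 2 * δ} := by
      intro y hy
      obtain ⟨hy1, hy2⟩ := hy
      simp only [gmAnn, mem_ofPred_eq] at hy2
      have t1 : dist x y ≤ δ + dist ξ y := dist_triangle _ _ _
      have t2 : dist ξ y ≤ δ + dist x y := by
        rw [hδdef, dist_comm x ξ]; exact dist_triangle _ _ _
      have key : |dist x y - ε i| ≤ δ ∨ |dist x y - ε (i + 1)| ≤ δ := by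
        by_contra hcon
        push Not at hcon
        obtain ⟨c1, c2⟩ := hcon
        apply hy2
        rw [lt_abs] at c1 c2
        constructor
        · rintro ⟨p1, p2⟩
          refine ⟨?_, ?_⟩
          · rcases c2 with c | c <;> linarith
          · rcases c1 with c | c <;> linarith
        · rintro ⟨p1, p2⟩
          refine ⟨?_, ?_⟩
          · rcases c2 with c | c <;> linarith
          · rcases c1 with c | c <;> linarith
      rcases key with h | h
      · left
        rw [abs_le] at h
        refine ⟨max_le hy1.le (by linarith), ?_⟩
        have := le_max_right R (ε i - δ)
        linarith
      · right
        rw [abs_le] at h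
        refine ⟨max_le hy1.le (by linarith), ?_⟩
        have := le_max_right R (ε (i + 1) - δ)
        linarith
    calc _ ≤ _ := lintegral_mono_set hsub
      _ ≤ _ := lintegral_union_le _ _ _
      _ ≤ ENNReal.ofReal (A * R) + ENNReal.ofReal (A * R) := add_le_add (hsh _) (hsh _)
      _ = _ := by
        rw [← ENNReal.ofReal_add (by positivity) (by positivity)]; congr 1; ring
  -- Hölder
  have hterm : ∀ i, (∫⁻ y in E i, ‖S.K ξ y‖ₑ * ‖f y‖ₑ) ^ r ≤
      ENNReal.ofReal (k ^ r * (2 * A * R) ^ (r - 1)) * ∫⁻ y in E i, w y := by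
    intro i
    have h1 : ∫⁻ y in E i, ‖S.K ξ y‖ₑ * ‖f y‖ₑ ≤ ENNReal.ofReal k *
        ∫⁻ y in E i, (ENNReal.ofReal (dist x y ^ (-((d : ℝ) - a))) * ‖f y‖ₑ) *
          ENNReal.ofReal (dist x y ^ (-a)) := by
      rw [← lintegral_const_mul _ (by fun_prop)]
      refine setLIntegral_mono' (hEm i) fun y hy => ?_
      have hy1 : R < dist x y := hy.1
      have hy0 : 0 < dist x y := by linarith
      have t1 : dist x y ≤ δ + dist ξ y := dist_triangle _ _ _
      have t3 : dist x y / 2 ≤ dist ξ y := by linarith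
      have t4 : 0 < dist ξ y := by linarith
      have hK : |S.K ξ y| ≤ k * dist x y ^ (-(d : ℝ)) := by
        refine (S.size ξ y (dist_pos.1 t4)).trans ?_
        calc S.Cst / dist ξ y ^ d ≤ S.Cst / (dist x y / 2) ^ d := by gcongr
          _ = _ := by
            rw [Real.rpow_neg hy0.le, Real.rpow_natCast, hk, div_pow]
            field_simp
      calc ‖S.K ξ y‖ₑ * ‖f y‖ₑ ≤ ENNReal.ofReal (k * dist x y ^ (-(d : ℝ))) * ‖f y‖ₑ := by
            gcongr
            rw [Real.enorm_eq_ofReal_abs]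
            exact ENNReal.ofReal_le_ofReal hK
        _ = _ := by
            have : dist x y ^ (-(d : ℝ)) = dist x y ^ (-((d : ℝ) - a)) * dist x y ^ (-a) := by
              rw [← Real.rpow_add hy0]; congr 1; ring
            rw [this, ENNReal.ofReal_mul hk0.le,
              ENNReal.ofReal_mul (p := dist x y ^ (-((d : ℝ) - a))) (by positivity)]
            ring
    have hH := ENNReal.lintegral_mul_le_Lp_mul_Lq (volume.restrict (E i)) hpq
      (f := fun y => ENNReal.ofReal (dist x y ^ (-((d : ℝ) - a))) * ‖f y‖ₑ)
      (g := fun y => ENNReal.ofReal (dist x y ^ (-a))) (by fun_prop) (by fun_prop)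
    simp only [Pi.mul_apply] at hH
    have e1 : ∀ y, (ENNReal.ofReal (dist x y ^ (-((d : ℝ) - a))) * ‖f y‖ₑ) ^ r = w y := by
      intro y
      rw [ENNReal.mul_rpow_of_nonneg _ _ hr0.le,
        ENNReal.ofReal_rpow_of_nonneg (by positivity) hr0.le, ← Real.rpow_mul dist_nonneg, hw]
      congr 3
      have : a * r = ((d : ℝ) - 1) * (r - 1) := by rw [ha, ← hdiv]; ring
      linear_combination this
    have e2 : ∀ y, (ENNReal.ofReal (dist x y ^ (-a))) ^ r' =
        ENNReal.ofReal (dist x y ^ (-((d : ℝ) - 1))) := by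
      intro y
      rw [ENNReal.ofReal_rpow_of_nonneg (by positivity) hr'.le, ← Real.rpow_mul dist_nonneg]
      congr 2
      rw [ha]; field_simp
    simp only [e1, e2] at hH
    calc _ ≤ (ENNReal.ofReal k * ((∫⁻ y in E i, w y) ^ (1 / r) *
          ENNReal.ofReal (2 * A * R) ^ (1 / r'))) ^ r := by
          gcongr
          refine h1.trans ?_
          gcongr
          refine hH.trans ?_
          gcongr
          exact hthin i
      _ = _ := by
          rw [ENNReal.mul_rpow_of_nonneg _ _ hr0.le, ENNReal.mul_rpow_of_nonneg _ _ hr0.le,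
            ← ENNReal.rpow_mul, ← ENNReal.rpow_mul, one_div_mul_cancel hr0.ne', ENNReal.rpow_one,
            hdiv, ENNReal.ofReal_rpow_of_nonneg hk0.le hr0.le,
            ENNReal.ofReal_rpow_of_nonneg (by positivity) hr1.le, ENNReal.ofReal_mul (by positivity)]
          ring
  have hsumw : ∑' i, ∫⁻ y in E i, w y ≤ ENNReal.ofReal (2 * C * R ^ ((d : ℝ) - (r + d - 1))) * M := by
    have h1 : ∀ i, ∫⁻ y in E i, w y ≤ (∫⁻ y in gmAnn ξ ε i ∩ {y | R < dist x y}, w y) +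
        ∫⁻ y in gmAnn x ε i ∩ {y | R < dist x y}, w y := by
      intro i
      refine (lintegral_mono_set ?_).trans (lintegral_union_le _ _ _)
      rintro y ⟨hy1, hy2⟩
      simp only [mem_union, mem_inter_iff, mem_ofPred_eq]
      tauto
    have h2 := hpow x (fun y => ‖f y‖ₑ ^ r) (by fun_prop) R hR M
      (fun t ht => gm_ball_r f r hr0.le x t ht)
    calc _ ≤ _ := ENNReal.tsum_le_tsum h1
      _ = _ := ENNReal.tsum_add
      _ ≤ _ := add_le_add (gm_sum_ann ξ ε hε _ (gm_meas_gt x R) w)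
          (gm_sum_ann x ε hε _ (gm_meas_gt x R) w)
      _ ≤ _ := add_le_add h2 h2
      _ = _ := by
        rw [← add_mul, ← ENNReal.ofReal_add (by positivity) (by positivity)]
        congr 2; ring
  calc _ ≤ (∑' i, ENNReal.ofReal (k ^ r * (2 * A * R) ^ (r - 1)) * ∫⁻ y in E i, w y) ^ (1 / r) := by
        gcongr with i
        exact hterm i
    _ ≤ (ENNReal.ofReal (k ^ r * (2 * A * R) ^ (r - 1)) *
        (ENNReal.ofReal (2 * C * R ^ ((d : ℝ) - (r + d - 1))) * M)) ^ (1 / r) := by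
        rw [ENNReal.tsum_mul_left]
        gcongr
    _ = (ENNReal.ofReal (k ^ r * (2 * A) ^ (r - 1) * (2 * C)) * M) ^ (1 / r) := by
        rw [← mul_assoc, ← ENNReal.ofReal_mul (by positivity)]
        congr 3
        rw [Real.mul_rpow (by positivity) hR.le]
        have : R ^ (r - 1) * R ^ ((d : ℝ) - (r + d - 1)) = 1 := by
          rw [← Real.rpow_add hR]
          have : r - 1 + ((d : ℝ) - (r + d - 1)) = 0 := by ring
          rw [this, Real.rpow_zero]
        linear_combination (k ^ r * (2 * A) ^ (r - 1) * (2 * C)) * this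
    _ = _ := by
        rw [ENNReal.mul_rpow_of_nonneg _ _ (by positivity),
          ENNReal.ofReal_rpow_of_nonneg (by positivity) (by positivity)]

lemma gm_E0 {d : ℕ} (S : CZO d) {r : ℝ} (hr : 1 < r) :
    ∃ A : ℝ, 0 < A ∧ ∀ (f : Rd d → ℝ), Measurable f → ∀ (x ξ : Rd d) (P : Set (Rd d)) (c κ : ℝ),
      0 < c → 0 < κ → MeasurableSet P → (∀ y ∈ P, dist x y ≤ κ * c) → (∀ y ∈ P, c ≤ dist ξ y) →
      ∫⁻ y in P, ‖S.K ξ y‖ₑ * ‖f y‖ₑ ≤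
        ENNReal.ofReal (A * κ ^ d) * maxCube (fun y => |f y| ^ r) x ^ (1 / r) := by
  obtain ⟨A, hA, hball⟩ := gm_ball_one d hr
  have hCst := S.hCst
  refine ⟨S.Cst * A, by positivity, ?_⟩
  intro f hf x ξ P c κ hc hκ hP h1 h2
  calc _ ≤ ∫⁻ y in P, ENNReal.ofReal (S.Cst / c ^ d) * ‖f y‖ₑ := by
        refine setLIntegral_mono' hP fun y hy => ?_
        gcongr
        rw [Real.enorm_eq_ofReal_abs]
        refine ENNReal.ofReal_le_ofReal ?_
        have h3 := h2 y hy
        refine (S.size ξ y (dist_pos.1 (hc.trans_le h3))).trans ?_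
        gcongr
    _ = ENNReal.ofReal (S.Cst / c ^ d) * ∫⁻ y in P, ‖f y‖ₑ := lintegral_const_mul _ (by fun_prop)
    _ ≤ ENNReal.ofReal (S.Cst / c ^ d) * ∫⁻ y in Metric.closedBall x (κ * c), ‖f y‖ₑ := by
        gcongr
        intro y hy
        rw [Metric.mem_closedBall, dist_comm]; exact h1 y hy
    _ ≤ ENNReal.ofReal (S.Cst / c ^ d) * (ENNReal.ofReal (A * (κ * c) ^ d) *
        maxCube (fun y => |f y| ^ r) x ^ (1 / r)) := by
        gcongr
        exact hball f hf x _ (by positivity)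
    _ = _ := by
        rw [← mul_assoc, ← ENNReal.ofReal_mul (by positivity)]
        congr 2
        rw [mul_pow]
        field_simp

lemma gm_dist_le {d : ℕ} (hd : 0 < d) (x y : Rd d) (b : ℝ) (hb : 0 ≤ b)
    (h : ∀ i, |x i - y i| ≤ b) : dist x y ≤ d * b := by
  rw [EuclideanSpace.dist_eq]
  have hd1 : (1 : ℝ) ≤ d := by exact_mod_cast hd
  refine Real.sqrt_le_iff.2 ⟨by positivity, ?_⟩
  calc ∑ i, dist (x i) (y i) ^ 2 ≤ ∑ _i : Fin d, b ^ 2 := by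
        refine Finset.sum_le_sum fun i _ => ?_
        rw [Real.dist_eq]
        exact pow_le_pow_left₀ (abs_nonneg _) (h i) 2
    _ = d * b ^ 2 := by simp
    _ ≤ (d * b) ^ 2 := by nlinarith [sq_nonneg b, mul_nonneg (sub_nonneg.2 hd1) (sq_nonneg b)]

lemma gm_coord_le {d : ℕ} (x y : Rd d) (i : Fin d) : |x i - y i| ≤ dist x y := by
  rw [dist_eq_norm]
  have := PiLp.norm_apply_le (x - y) i
  rwa [Real.norm_eq_abs, PiLp.sub_apply] at this

lemma gm_meas_dilate {d : ℕ} (Q : Cube d) (t : ℝ) : MeasurableSet (Q.dilate t) := by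
  have : Q.dilate t = ⋂ i, (fun y : Rd d => y i) ⁻¹'
      Ico (Q.c i - t * Q.l / 2) (Q.c i + t * Q.l / 2) := by
    ext y; simp [Cube.dilate]
  rw [this]
  refine MeasurableSet.iInter fun i => ?_
  have h : Measurable fun y : Rd d => y i := by fun_prop
  exact h measurableSet_Ico

lemma gm_meas_set {d : ℕ} (Q : Cube d) : MeasurableSet Q.set := by
  have : Q.set = Q.dilate 1 := by simp [Cube.set, Cube.dilate]
  rw [this]
  exact gm_meas_dilate Q 1

lemma gm_pointwise {α : Type*} (A B G H : Set α) (hGH : G ⊆ H) (E : Set α)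
    (hE : ∀ y ∈ G, ¬ (y ∈ A ↔ y ∈ B) → y ∈ E) (k l f : α → ℝ) (y : α) :
    ‖A.indicator (fun y => k y * H.indicator f y) y - (B ∩ G).indicator (fun y => l y * f y) y‖ₑ ≤
      (A ∩ (H \ G)).indicator (fun y => ‖k y‖ₑ * ‖f y‖ₑ) y +
      (B ∩ G).indicator (fun y => ‖k y - l y‖ₑ * ‖f y‖ₑ) y +
      E.indicator (fun y => ‖k y‖ₑ * ‖f y‖ₑ) y := by
  by_cases hG : y ∈ G
  · have hH := hGH hG
    by_cases hA : y ∈ A <;> by_cases hB : y ∈ B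
    · simp only [Set.indicator, hA, hB, hG, hH, mem_inter_iff, Set.mem_sdiff, if_true, and_self,
        not_true, and_false, if_false, zero_add]
      rw [← sub_mul, enorm_mul]
      exact le_self_add
    · have hEy := hE y hG (by tauto)
      simp [Set.indicator, hA, hB, hG, hH, hEy, enorm_mul]
    · have hEy := hE y hG (by tauto)
      simp only [Set.indicator, hA, hB, hG, hH, hEy, mem_inter_iff, Set.mem_sdiff, if_true, and_self,
        not_true, and_false, if_false, zero_add, false_and, zero_sub, enorm_neg]
      rw [← add_mul, enorm_mul]
      gcongr
      rw [← enorm_neg (l y)]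
      calc ‖-l y‖ₑ = ‖(k y - l y) - k y‖ₑ := by congr 1; ring
        _ ≤ _ := enorm_sub_le
    · simp [Set.indicator, hA, hB]
  · by_cases hA : y ∈ A <;> by_cases hH : y ∈ H <;> simp [Set.indicator, hA, hH, hG, enorm_mul]

lemma gm_clip_int {d : ℕ} (hd : 0 < d) (S : CZO d) {ρ q : ℝ} (hρ : 0 < ρ) (hq : 1 < q) (f : Rd d → ℝ)
    (hf : Measurable f) (hfq : (∫⁻ x, ENNReal.ofReal |f x| ^ q ∂volume) ≠ ⊤) (x : Rd d)
    {R R0 : ℝ} (hR : 0 < R) (ε : ℕ → ℝ) (hε : StrictAnti ε) (hpos : ∀ i, 0 < ε i)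
    (hlim : Tendsto ε atTop (nhds 0)) :
    (∑' i, ‖∫ y in gmAnn x ε i ∩ {y | R < dist x y ∧ dist x y ≤ R0}, S.K x y * f y‖ₑ ^ ρ) ^ (1 / ρ)
      ≤ S.var ρ f x := by
  by_cases h : R < R0
  · refine le_trans (le_of_eq ?_) (gm_clip S ρ hρ f x hR h ε hε hpos hlim)
    congr 1
    refine tsum_congr fun i => ?_
    have h1 := hε (Nat.lt_succ_self i)
    simp only [Nat.succ_eq_add_one] at h1
    rw [gm_trunc_sub hd S hq f hf hfq x (hR.trans_le (le_max_left _ _))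
      (max_le_max le_rfl (min_le_min le_rfl h1.le))]
    congr 4
    ext y
    simp only [gmAnn, mem_inter_iff, mem_ofPred_eq, max_lt_iff, le_max_iff, min_lt_iff, le_min_iff]
    constructor
    · rintro ⟨⟨a, b⟩, c, e⟩
      exact ⟨⟨c, Or.inr a⟩, Or.inr ⟨e, b⟩⟩
    · rintro ⟨⟨c, a⟩, b⟩
      have b' : dist x y ≤ R0 ∧ dist x y ≤ ε i := by
        rcases b with b | b
        · linarith
        · exact b
      refine ⟨⟨?_, b'.2⟩, c, b'.1⟩
      rcases a with a | a
      · linarith [b'.1]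
      · exact a
  · have : {y : Rd d | R < dist x y ∧ dist x y ≤ R0} = ∅ := by
      ext y
      simp only [mem_ofPred_eq, mem_empty_iff_false, iff_false]
      rintro ⟨a, b⟩
      linarith
    rw [this]
    simp [hρ]

lemma gm_core {d : ℕ} (hd : 0 < d) (S : CZO d) {ρ q r : ℝ} (hρ : 2 < ρ) (hq : 1 < q)
    (hr : 1 < r) (hrρ : r < ρ) :
    ∃ C : ℝ, 0 < C ∧ ∀ (f : Rd d → ℝ), Measurable f →
      (∫⁻ x, ENNReal.ofReal |f x| ^ q ∂volume) ≠ ⊤ →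
      ∀ (Q₀ Q : Cube d) (x ξ : Rd d), x ∈ Q₀.set → x ∈ Q.set → ξ ∈ Q.set →
        S.var ρ ((Q₀.dilate 3 \ Q.dilate 3).indicator f) ξ ≤
          ENNReal.ofReal C * maxCube (fun y => |f y| ^ r) x ^ (1 / r) + S.var ρ f x := by
  obtain ⟨A, hA, hE0⟩ := gm_E0 S hr
  obtain ⟨C2, hC2, hE2⟩ := gm_E2 S hr
  obtain ⟨C3, hC3, hE3⟩ := gm_E3 hd S hr
  have hd1 : (1 : ℝ) ≤ d := by exact_mod_cast hd
  refine ⟨A * (3 * d) ^ d + A * (8 * d) ^ d + C2 + C3, by positivity, ?_⟩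
  intro f hf hfq Q₀ Q x ξ hx0 hx hξ
  set D := maxCube (fun y => |f y| ^ r) x ^ (1 / r) with hD
  set H := Q₀.dilate 3 \ Q.dilate 3 with hH
  have hl := Q.hl
  have hl0 := Q₀.hl
  set R := 3 * d * Q.l with hRdef
  set R0 := Q₀.l / 2 with hR0def
  have hR : 0 < R := by positivity
  have hR0 : 0 < R0 := by positivity
  set G := {y : Rd d | R < dist x y ∧ dist x y ≤ R0} with hG
  have hGm : MeasurableSet G := gm_meas_ann _ _ _
  have hHm : MeasurableSet H := (gm_meas_dilate _ _).diff (gm_meas_dilate _ _)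
  have hδ : dist x ξ ≤ d * Q.l := by
    refine gm_dist_le hd x ξ _ hl.le fun i => ?_
    have h1 := hx i
    have h2 := hξ i
    rw [abs_le]
    constructor <;> linarith [h1.1, h1.2, h2.1, h2.2]
  have h2δ : 2 * dist x ξ ≤ R := by
    have : 0 < d * Q.l := by positivity
    rw [hRdef]; linarith
  have hGH : G ⊆ H := by
    intro y hy
    obtain ⟨hy1, hy2⟩ := hy
    refine ⟨fun i => ?_, fun hy3 => ?_⟩
    · have h1 := hx0 i
      have h2 := (gm_coord_le x y i).trans hy2
      rw [abs_le] at h2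
      constructor <;> linarith [h1.1, h1.2, h2.1, h2.2]
    · have : dist x y ≤ d * (2 * Q.l) := by
        refine gm_dist_le hd x y _ (by positivity) fun i => ?_
        have h1 := hx i
        have h2 := hy3 i
        rw [abs_le]
        constructor <;> linarith [h1.1, h1.2, h2.1, h2.2]
      have h3 : 0 < d * Q.l := by positivity
      rw [hRdef] at hy1
      linarith
  have hHξ : ∀ y ∈ H, Q.l ≤ dist ξ y := by
    intro y hy
    by_contra hcon
    push Not at hcon
    refine hy.2 fun i => ?_
    have h1 := hξ i
    have h2 := (gm_coord_le ξ y i).trans_lt hcon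
    rw [abs_lt] at h2
    constructor <;> linarith [h1.1, h1.2, h2.1, h2.2]
  have hHx : ∀ y ∈ H, dist x y ≤ d * (2 * Q₀.l) := by
    intro y hy
    refine gm_dist_le hd x y _ (by positivity) fun i => ?_
    have h1 := hx0 i
    have h2 := hy.1 i
    rw [abs_le]
    constructor <;> linarith [h1.1, h1.2, h2.1, h2.2]
  -- the first error term
  have hE1 : ∫⁻ y in H \ G, ‖S.K ξ y‖ₑ * ‖f y‖ₑ ≤
      ENNReal.ofReal (A * (3 * d) ^ d) * D + ENNReal.ofReal (A * (8 * d) ^ d) * D := by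
    have hsub : H \ G ⊆ (H ∩ {y | R < dist x y}ᶜ) ∪ (H ∩ ({y | R < dist x y} ∩ {y | R0 < dist x y})) := by
      rintro y ⟨hy1, hy2⟩
      simp only [hG, mem_ofPred_eq] at hy2
      simp only [mem_union, mem_inter_iff, mem_compl_iff, mem_ofPred_eq]
      by_cases h : R < dist x y
      · right
        refine ⟨hy1, h, ?_⟩
        by_contra h'
        exact hy2 ⟨h, not_lt.1 h'⟩
      · exact Or.inl ⟨hy1, h⟩
    refine (lintegral_mono_set hsub).trans ((lintegral_union_le _ _ _).trans (add_le_add ?_ ?_))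
    · refine hE0 f hf x ξ _ Q.l (3 * d) hl (by positivity) (hHm.inter (gm_meas_gt x R).compl) ?_ ?_
      · intro y hy
        exact not_lt.1 hy.2
      · intro y hy
        exact hHξ y hy.1
    · refine hE0 f hf x ξ _ (Q₀.l / 4) (8 * d) (by positivity) (by positivity)
        (hHm.inter ((gm_meas_gt x R).inter (gm_meas_gt x R0))) ?_ ?_
      · intro y hy
        have := hHx y hy.1
        linarith
      · intro y hy
        have h1 : R < dist x y := hy.2.1
        have h2 : R0 < dist x y := hy.2.2
        have := dist_triangle x ξ y
        linarith
  set g := H.indicator f with hg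
  have hgm : Measurable g := hf.indicator hHm
  have hgq : (∫⁻ x, ENNReal.ofReal |g x| ^ q ∂volume) ≠ ⊤ := by
    refine ne_top_of_le_ne_top hfq (lintegral_mono fun y => ?_)
    have : |g y| ≤ |f y| := by
      rw [hg]
      by_cases hy : y ∈ H
      · rw [indicator_of_mem hy]
      · rw [indicator_of_notMem hy]; simp
    have hq0 : 0 ≤ q := by linarith
    gcongr
  refine iSup₂_le fun ε hε => ?_
  obtain ⟨hanti, hpos, hlim⟩ := hε
  set E : ℕ → Set (Rd d) := fun i => {y | R < dist x y ∧ ¬ (y ∈ gmAnn ξ ε i ↔ y ∈ gmAnn x ε i)}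
    with hEdef
  have hEm : ∀ i, MeasurableSet (E i) := fun i => by
    have h1 := gmAnn_meas ξ ε i
    have h2 := gmAnn_meas x ε i
    have : E i = {y | R < dist x y} ∩ ((gmAnn ξ ε i \ gmAnn x ε i) ∪ (gmAnn x ε i \ gmAnn ξ ε i)) := by
      ext y
      simp only [hEdef, mem_ofPred_eq, mem_inter_iff, mem_union, Set.mem_sdiff]
      tauto
    rw [this]
    exact (gm_meas_gt x R).inter ((h1.diff h2).union (h2.diff h1))
  have hterm : ∀ i, ENNReal.ofReal |S.trunc (ε (i + 1)) g ξ - S.trunc (ε i) g ξ| ≤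
      ‖∫ y in gmAnn x ε i ∩ G, S.K x y * f y‖ₑ +
      (((∫⁻ y in gmAnn ξ ε i ∩ (H \ G), ‖S.K ξ y‖ₑ * ‖f y‖ₑ) +
        ∫⁻ y in gmAnn x ε i ∩ G, ‖S.K ξ y - S.K x y‖ₑ * ‖f y‖ₑ) +
        ∫⁻ y in E i, ‖S.K ξ y‖ₑ * ‖f y‖ₑ) := by
    intro i
    have h1 := hanti (Nat.lt_succ_self i)
    simp only [Nat.succ_eq_add_one] at h1
    have hKm : Measurable (S.K ξ) := S.measK.of_uncurry_left
    have hKx : Measurable (S.K x) := S.measK.of_uncurry_left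
    rw [gm_trunc_sub hd S hq g hgm hgq ξ (hpos _) h1.le, ← Real.enorm_eq_ofReal_abs]
    change ‖∫ y in gmAnn ξ ε i, S.K ξ y * g y‖ₑ ≤ _
    have i1 : IntegrableOn (fun y => S.K ξ y * g y) (gmAnn ξ ε i) :=
      (gm_integrable hd S hq g hgm hgq ξ (hpos (i + 1))).mono_set fun y hy => hy.1
    have i2 : IntegrableOn (fun y => S.K x y * f y) (gmAnn x ε i ∩ G) :=
      (gm_integrable hd S hq f hf hfq x (hpos (i + 1))).mono_set fun y hy => hy.1.1
    have hBm : MeasurableSet (gmAnn x ε i ∩ G) := (gmAnn_meas x ε i).inter hGm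
    have hAm : MeasurableSet (gmAnn ξ ε i) := gmAnn_meas ξ ε i
    have hdiff : ‖(∫ y in gmAnn ξ ε i, S.K ξ y * g y) - ∫ y in gmAnn x ε i ∩ G, S.K x y * f y‖ₑ ≤
        ((∫⁻ y in gmAnn ξ ε i ∩ (H \ G), ‖S.K ξ y‖ₑ * ‖f y‖ₑ) +
        ∫⁻ y in gmAnn x ε i ∩ G, ‖S.K ξ y - S.K x y‖ₑ * ‖f y‖ₑ) +
        ∫⁻ y in E i, ‖S.K ξ y‖ₑ * ‖f y‖ₑ := by
      rw [← integral_indicator hAm, ← integral_indicator hBm,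
        ← integral_sub (i1.integrable_indicator hAm) (i2.integrable_indicator hBm)]
      refine (enorm_integral_le_lintegral_enorm _).trans ?_
      rw [← lintegral_indicator (hAm.inter (hHm.diff hGm)), ← lintegral_indicator hBm,
        ← lintegral_indicator (hEm i), ← lintegral_add_left, ← lintegral_add_left]
      · refine lintegral_mono fun y => ?_
        exact gm_pointwise (gmAnn ξ ε i) (gmAnn x ε i) G H hGH (E i)
          (fun y hy h => ⟨hy.1, h⟩) (S.K ξ) (S.K x) f y
      · exact (Measurable.indicator (by fun_prop) (hAm.inter (hHm.diff hGm))).add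
          (Measurable.indicator (by fun_prop) hBm)
      · exact Measurable.indicator (by fun_prop) (hAm.inter (hHm.diff hGm))
    calc ‖∫ y in gmAnn ξ ε i, S.K ξ y * g y‖ₑ
        = ‖(∫ y in gmAnn x ε i ∩ G, S.K x y * f y) + ((∫ y in gmAnn ξ ε i, S.K ξ y * g y) -
            ∫ y in gmAnn x ε i ∩ G, S.K x y * f y)‖ₑ := by congr 1; ring
      _ ≤ _ := enorm_add_le _ _
      _ ≤ _ := by gcongr
  refine (gm_minkowski3 _ _ _ _ (by linarith : 1 ≤ ρ) (by linarith : 0 < r) hrρ.le hterm).trans ?_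
  rw [add_comm]
  refine add_le_add ?_ (gm_clip_int hd S (by linarith) hq f hf hfq x hR ε hanti hpos hlim)
  rw [ENNReal.ofReal_add (by positivity) hC3.le, ENNReal.ofReal_add (by positivity) hC2.le,
    ENNReal.ofReal_add (by positivity) (by positivity), add_mul, add_mul, add_mul, ENNReal.tsum_add]
  refine add_le_add (add_le_add ?_ ?_) (hE3 f hf x ξ R hR h2δ ε hanti.antitone)
  · exact (gm_sum_ann ξ ε hanti.antitone _ (hHm.diff hGm) _).trans hE1
  · refine (gm_sum_ann x ε hanti.antitone _ hGm _).trans ?_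
    exact (lintegral_mono_set fun y hy => hy.1).trans (hE2 f hf x ξ R hR h2δ)

/-- Pointwise bound of the local grand maximal truncated operator by the
Hardy–Littlewood maximal function and the variation, with constant independent of `Q₀`. -/
theorem grandMaxLoc_pointwise_bound
    (d : ℕ) (hd : 0 < d) (S : CZO d) (ρ q : ℝ) (hρ : 2 < ρ) (hq : 1 < q)
    (hbdd : S.VarBdd ρ q) (r : ℝ) (hr : 1 < r) (hrq : r < q) (hrρ : r < ρ) :
    ∃ C : ℝ, 0 < C ∧ ∀ (Q₀ : Cube d) (f : Rd d → ℝ), Measurable f →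
      (∫⁻ x, ENNReal.ofReal |f x| ^ q ∂volume) ≠ ⊤ →
      ∀ᵐ x ∂(volume : Measure (Rd d)), x ∈ Q₀.set →
        S.grandMaxLoc ρ Q₀ f x ≤
          ENNReal.ofReal C * maxCube (fun y => |f y| ^ r) x ^ (1 / r) + S.var ρ f x := by
  obtain ⟨C, hC, hcore⟩ := gm_core hd S hρ hq hr hrρ
  refine ⟨C, hC, fun Q₀ f hf hfq => Eventually.of_forall fun x hx => ?_⟩
  unfold CZO.grandMaxLoc
  rw [if_pos hx]
  refine iSup₂_le fun Q hQ => ?_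
  refine essSup_le_of_ae_le _ ?_
  filter_upwards [ae_restrict_mem (gm_meas_set Q)] with ξ hξ
  exact hcore f hf hfq Q₀ Q x ξ hx hQ.1 hξ
end
end

section
/- Let T be a scalar Calderón–Zygmund operator on ℝ^d with modulus of continuity ω satisfying the Dini condition, let ρ ∈ (2,∞), assume V_ρ(T_*) is bounded on L^q(ℝ^d) for some q ∈ (1,∞), and let r ∈ (1, min{q,ρ}). Fix a cube Q₀, a point x ∈ Q₀, a cube Q with x ∈ Q ⊂ Q₀, and let B_x := B(x, 9d·ℓ(Q)). Then for every ξ ∈ Q and every f ∈ L^q(ℝ^d), |V_ρ(T_*(f χ_{3Q₀∖B_x}))(ξ) − V_ρ(T_*(f χ_{3Q₀∖B_x}))(x)| ≤ C [M(|f|^r)(x)]^{1/r}, where M is the Hardy–Littlewood maximal operator over cubes and C is independent of Q₀, Q, x, ξ and f. -/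
open MeasureTheory Set Filter Classical
open scoped ENNReal
noncomputable section

theorem aux_minkowski (p : ℝ) (hp : 1 ≤ p) (a b : ℕ → ℝ≥0∞) :
    (∑' i, (a i + b i) ^ p) ^ (1 / p) ≤ (∑' i, a i ^ p) ^ (1 / p) + (∑' i, b i ^ p) ^ (1 / p) := by
  have h := ENNReal.lintegral_Lp_add_le (μ := (Measure.count : Measure ℕ)) (f := a) (g := b)
    (measurable_of_countable _).aemeasurable (measurable_of_countable _).aemeasurable hp
  simpa [lintegral_count] using h

theorem aux_ell (p ρ : ℝ) (hp : 0 < p) (hpρ : p ≤ ρ) (b : ℕ → ℝ≥0∞) :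
    (∑' i, b i ^ ρ) ^ (1 / ρ) ≤ (∑' i, b i ^ p) ^ (1 / p) := by
  set s : ℝ≥0∞ := (∑' i, b i ^ p) ^ (1 / p) with hs
  have hsp : s ^ p = ∑' i, b i ^ p := by
    rw [hs, ← ENNReal.rpow_mul]; simp [hp.ne']
  have hb : ∀ i, b i ≤ s := by
    intro i
    have h1 : b i ^ p ≤ s ^ p := by rw [hsp]; exact ENNReal.le_tsum i
    exact (ENNReal.rpow_le_rpow_iff hp).1 h1
  have hρ : 0 < ρ := lt_of_lt_of_le hp hpρ
  have h2 : ∑' i, b i ^ ρ ≤ s ^ ρ := by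
    have hsplit : ∀ t : ℝ≥0∞, t ^ ρ = t ^ p * t ^ (ρ - p) := by
      intro t
      rw [← ENNReal.rpow_add_of_nonneg _ _ hp.le (by linarith)]; congr 1; ring
    calc ∑' i, b i ^ ρ ≤ ∑' i, b i ^ p * s ^ (ρ - p) := by
          refine ENNReal.tsum_le_tsum fun i => ?_
          rw [hsplit]
          gcongr
          exact hb i
      _ = s ^ ρ := by rw [ENNReal.tsum_mul_right, ← hsp, hsplit s]
  calc (∑' i, b i ^ ρ) ^ (1 / ρ) ≤ (s ^ ρ) ^ (1 / ρ) := by gcongr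
    _ = s := by rw [← ENNReal.rpow_mul]; simp [hρ.ne']

/-- Weighted Hölder (Jensen). -/
theorem aux_holder {α : Type*} [MeasurableSpace α] (μ : Measure α) (r : ℝ) (hr : 1 < r)
    (H v : α → ℝ≥0∞) (hH : Measurable H) (hv : Measurable v) :
    (∫⁻ y, H y * v y ∂μ) ^ r ≤ (∫⁻ y, H y ^ r * v y ∂μ) * (∫⁻ y, v y ∂μ) ^ (r - 1) := by
  have hr0 : 0 < r := by linarith
  have hr1 : 0 < r - 1 := by linarith
  have hc : r.HolderConjugate (r / (r - 1)) := by
    rw [Real.holderConjugate_iff]; refine ⟨hr, ?_⟩; field_simp; ring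
  have h := ENNReal.lintegral_mul_le_Lp_mul_Lq μ hc (f := fun y => H y * v y ^ (1 / r))
    (g := fun y => v y ^ ((r - 1) / r)) (by fun_prop) (by fun_prop)
  have e1 : ∀ y, ((fun y => H y * v y ^ (1 / r)) * (fun y => v y ^ ((r - 1) / r))) y
      = H y * v y := by
    intro y
    simp only [Pi.mul_apply]
    rw [mul_assoc, ← ENNReal.rpow_add_of_nonneg _ _ (by positivity) (by positivity)]
    have : 1 / r + (r - 1) / r = 1 := by field_simp; ring
    rw [this, ENNReal.rpow_one]
  have e2 : ∀ y, (H y * v y ^ (1 / r)) ^ r = H y ^ r * v y := by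
    intro y
    rw [ENNReal.mul_rpow_of_nonneg _ _ hr0.le, ← ENNReal.rpow_mul]
    simp [hr0.ne']
  have e3 : ∀ y, (v y ^ ((r - 1) / r)) ^ (r / (r - 1)) = v y := by
    intro y
    rw [← ENNReal.rpow_mul]
    have : (r - 1) / r * (r / (r - 1)) = 1 := by field_simp
    rw [this, ENNReal.rpow_one]
  simp only [e1, e2, e3] at h
  calc (∫⁻ y, H y * v y ∂μ) ^ r
      ≤ ((∫⁻ y, H y ^ r * v y ∂μ) ^ (1 / r) * (∫⁻ y, v y ∂μ) ^ (1 / (r / (r - 1)))) ^ r := by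
        gcongr
    _ = _ := by
        rw [ENNReal.mul_rpow_of_nonneg _ _ hr0.le, ← ENNReal.rpow_mul, ← ENNReal.rpow_mul]
        have h1 : 1 / r * r = 1 := by field_simp
        have h2 : 1 / (r / (r - 1)) * r = r - 1 := by field_simp
        rw [h1, h2, ENNReal.rpow_one]

/-- Thin shells: weighted measure. -/
theorem aux_shell (d : ℕ) (hd : 0 < d) : ∃ c : ℝ, 0 ≤ c ∧ ∀ (x : Rd d) (a b : ℝ), a ≤ b →
    ∫⁻ y in {y | a ≤ dist x y ∧ dist x y ≤ b ∧ 0 < dist x y},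
      ENNReal.ofReal ((dist x y ^ (d - 1))⁻¹) ≤ ENNReal.ofReal (c * (b - a)) := by
  have : Nonempty (Fin d) := ⟨⟨0, hd⟩⟩
  have hfin : Module.finrank ℝ (Rd d) = d := by simp
  refine ⟨d * (volume : Measure (Rd d)).real (Metric.ball 0 1), by positivity, ?_⟩
  intro x a b hab
  set s : Set ℝ := Icc a b ∩ Ioi 0 with hs
  have hsm : MeasurableSet s := measurableSet_Icc.inter measurableSet_Ioi
  set h : ℝ → ℝ := s.indicator (fun u => (u ^ (d - 1))⁻¹) with hh
  have hmeas : MeasurableSet {y : Rd d | a ≤ dist x y ∧ dist x y ≤ b ∧ 0 < dist x y} := by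
    have : {y : Rd d | a ≤ dist x y ∧ dist x y ≤ b ∧ 0 < dist x y} = (fun y => dist x y) ⁻¹' s := by
      ext y; simp [hs, and_assoc]
    rw [this]
    exact (measurable_const.dist measurable_id) hsm
  have hmul : (fun y : ℝ => y ^ (d - 1) • h y) = s.indicator (fun _ => (1 : ℝ)) := by
    funext u
    by_cases hu : u ∈ s
    · have : 0 < u := hu.2
      simp [hh, hu, this.ne']
    · simp [hh, hu]
  have hvol : volume s ≤ ENNReal.ofReal (b - a) := by
    calc volume s ≤ volume (Icc a b) := measure_mono inter_subset_left
      _ = _ := by simp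
  have hint : Integrable (fun y : Rd d => h ‖y‖) := by
    rw [integrable_fun_norm_addHaar, hfin, hmul]
    refine Integrable.integrableOn ?_
    rw [integrable_indicator_iff hsm]
    exact integrableOn_const (by exact (lt_of_le_of_lt hvol ENNReal.ofReal_lt_top).ne)
  have hval := integral_fun_norm_addHaar (volume : Measure (Rd d)) h
  rw [hfin, hmul] at hval
  have hpos : ∀ u, 0 ≤ h u := by
    intro u
    refine indicator_nonneg ?_ u
    intro v hv
    have : 0 < v := hv.2
    positivity
  calc ∫⁻ y in {y | a ≤ dist x y ∧ dist x y ≤ b ∧ 0 < dist x y},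
      ENNReal.ofReal ((dist x y ^ (d - 1))⁻¹)
      = ∫⁻ y, ENNReal.ofReal (h ‖y - x‖) := by
        rw [← lintegral_indicator hmeas]
        congr 1
        funext y
        rw [← dist_eq_norm, dist_comm y x]
        by_cases hy : dist x y ∈ s
        · have hy' : a ≤ dist x y ∧ dist x y ≤ b ∧ 0 < dist x y := ⟨hy.1.1, hy.1.2, hy.2⟩
          rw [indicator_of_mem (by exact hy'), hh, indicator_of_mem hy]
        · have hy' : ¬ (a ≤ dist x y ∧ dist x y ≤ b ∧ 0 < dist x y) :=
            fun h => hy ⟨⟨h.1, h.2.1⟩, h.2.2⟩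
          rw [indicator_of_notMem (by exact hy'), hh, indicator_of_notMem hy]; simp
    _ = ∫⁻ y : Rd d, ENNReal.ofReal (h ‖y‖) :=
        lintegral_sub_right_eq_self (fun y : Rd d => ENNReal.ofReal (h ‖y‖)) x
    _ = ENNReal.ofReal (∫ y : Rd d, h ‖y‖) :=
        (ofReal_integral_eq_lintegral_ofReal hint (Eventually.of_forall fun y => hpos _)).symm
    _ ≤ _ := by
        rw [hval]
        apply ENNReal.ofReal_le_ofReal
        rw [nsmul_eq_mul, smul_eq_mul, ← mul_assoc]
        gcongr
        rw [setIntegral_indicator hsm]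
        simp only [integral_const, smul_eq_mul, mul_one, measureReal_restrict_apply_univ]
        refine ENNReal.toReal_le_of_le_ofReal (by linarith) ?_
        exact (measure_mono inter_subset_right).trans hvol

/-- Summation over dyadic shells. -/
theorem aux_dyadic (d : ℕ) (x : Rd d) (G W : Rd d → ℝ≥0∞)
    (B : ℝ≥0∞) (hB : ∀ R : ℝ, 0 < R → ∫⁻ y in Metric.ball x R, G y ≤ B * ENNReal.ofReal (R ^ d))
    (R₀ : ℝ) (hR : 0 < R₀) (a : ℕ → ℝ≥0∞) (ha : ∀ k, a k ≠ ⊤)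
    (hW : ∀ k : ℕ, ∀ y, 2 ^ k * R₀ ≤ dist x y → dist x y < 2 ^ (k + 1) * R₀ →
      W y ≤ a k * ENNReal.ofReal (((2 ^ k * R₀) ^ d)⁻¹)) :
    ∫⁻ y in {y | R₀ ≤ dist x y}, G y * W y ≤ B * ENNReal.ofReal (2 ^ d) * ∑' k, a k := by
  set A : ℕ → Set (Rd d) := fun k => {y | 2 ^ k * R₀ ≤ dist x y ∧ dist x y < 2 ^ (k + 1) * R₀}
    with hA
  have hdm : Measurable (fun y : Rd d => dist x y) := measurable_const.dist measurable_id
  have hAm : ∀ k, MeasurableSet (A k) := fun k =>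
    (measurableSet_le measurable_const hdm).inter (measurableSet_lt hdm measurable_const)
  have hcov : {y | R₀ ≤ dist x y} ⊆ ⋃ k, A k := by
    intro y hy
    have h1 : 1 ≤ dist x y / R₀ := by rw [le_div_iff₀ hR]; simpa using hy
    obtain ⟨n, hn1, hn2⟩ := exists_nat_pow_near h1 (by norm_num : (1 : ℝ) < 2)
    refine mem_iUnion.2 ⟨n, ?_, ?_⟩
    · rwa [le_div_iff₀ hR] at hn1
    · rwa [div_lt_iff₀ hR] at hn2
  calc ∫⁻ y in {y | R₀ ≤ dist x y}, G y * W y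
      ≤ ∫⁻ y in ⋃ k, A k, G y * W y := lintegral_mono_set hcov
    _ ≤ ∑' k, ∫⁻ y in A k, G y * W y := lintegral_iUnion_le _ _
    _ ≤ ∑' k, B * ENNReal.ofReal (2 ^ d) * a k := by
        refine ENNReal.tsum_le_tsum fun k => ?_
        have hp : 0 < 2 ^ k * R₀ := by positivity
        set q : ℝ≥0∞ := a k * ENNReal.ofReal (((2 ^ k * R₀) ^ d)⁻¹) with hq
        calc ∫⁻ y in A k, G y * W y ≤ ∫⁻ y in A k, G y * q := by
              refine setLIntegral_mono' (hAm k) fun y hy => ?_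
              gcongr
              exact hW k y hy.1 hy.2
          _ ≤ ∫⁻ y in Metric.ball x (2 ^ (k + 1) * R₀), G y * q := by
              refine lintegral_mono_set fun y hy => ?_
              rw [Metric.mem_ball, dist_comm]; exact hy.2
          _ ≤ _ := ?_
        · rw [lintegral_mul_const' _ _ (ENNReal.mul_ne_top (ha k) ENNReal.ofReal_ne_top)]
          calc _ ≤ B * ENNReal.ofReal ((2 ^ (k + 1) * R₀) ^ d) * q := by
                gcongr; exact hB _ (by positivity)
            _ = _ := by
                rw [hq]
                have : ENNReal.ofReal ((2 ^ (k + 1) * R₀) ^ d)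
                    = ENNReal.ofReal (2 ^ d) * ENNReal.ofReal ((2 ^ k * R₀) ^ d) := by
                  rw [← ENNReal.ofReal_mul (by positivity)]; congr 1; rw [← mul_pow]; ring
                rw [this]
                have h1 : ENNReal.ofReal ((2 ^ k * R₀) ^ d) *
                    ENNReal.ofReal (((2 ^ k * R₀) ^ d)⁻¹) = 1 := by
                  rw [← ENNReal.ofReal_mul (by positivity), mul_inv_cancel₀ (by positivity)]; simp
                calc _ = B * ENNReal.ofReal (2 ^ d) * a k * (ENNReal.ofReal ((2 ^ k * R₀) ^ d) *
                    ENNReal.ofReal (((2 ^ k * R₀) ^ d)⁻¹)) := by ring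
                  _ = _ := by rw [h1, mul_one]
    _ = _ := by rw [ENNReal.tsum_mul_left]

theorem aux_dini {d : ℕ} (S : CZO d) : ∑' k : ℕ, ENNReal.ofReal (S.ω ((1 / 2) ^ (k + 1))) < ⊤ := by
  have hpos : ∀ t, 0 ≤ t → 0 ≤ S.ω t := by
    intro t ht
    have := S.ω_mono (by simp) (show t ∈ Ici (0 : ℝ) from ht) ht
    rwa [S.ω_zero] at this
  set A : ℕ → Set ℝ := fun k => Ioo ((1 / 2) ^ (k + 1)) ((1 / 2) ^ k) with hA
  have hdisj : Pairwise (Function.onFun Disjoint A) := by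
    have : ∀ i j, i < j → Disjoint (A i) (A j) := by
      intro i j hij
      rw [Set.disjoint_left]
      intro t h1 h2
      have h3 : ((1 : ℝ) / 2) ^ j ≤ (1 / 2) ^ (i + 1) :=
        pow_le_pow_of_le_one (by norm_num) (by norm_num) hij
      exact absurd (h1.1.trans h2.2) (not_lt.2 h3)
    intro i j hij
    rcases lt_or_gt_of_ne hij with h | h
    · exact this i j h
    · exact (this j i h).symm
  have hsub : (⋃ k, A k) ⊆ Ioo (0 : ℝ) 1 := by
    refine iUnion_subset fun k t ht => ⟨lt_trans (by positivity) ht.1, ?_⟩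
    exact lt_of_lt_of_le ht.2 (pow_le_one₀ (by norm_num) (by norm_num))
  have hfin : ∫⁻ t in Ioo (0 : ℝ) 1, ENNReal.ofReal (S.ω t / t) < ⊤ :=
    S.dini.lintegral_lt_top
  have key : ∑' k : ℕ, ENNReal.ofReal (S.ω ((1 / 2) ^ (k + 1))) * ENNReal.ofReal (1 / 2) ≤
      ∫⁻ t in Ioo (0 : ℝ) 1, ENNReal.ofReal (S.ω t / t) := by
    calc _ ≤ ∑' k : ℕ, ∫⁻ t in A k, ENNReal.ofReal (S.ω t / t) := by
          refine ENNReal.tsum_le_tsum fun k => ?_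
          have h2 : (0 : ℝ) < (1 / 2) ^ k := by positivity
          calc _ = ∫⁻ t in A k, ENNReal.ofReal (S.ω ((1 / 2) ^ (k + 1)) / (1 / 2) ^ k) := by
                rw [lintegral_const, Measure.restrict_apply_univ, hA, Real.volume_Ioo,
                  ← ENNReal.ofReal_mul (hpos _ (by positivity)),
                  ← ENNReal.ofReal_mul (div_nonneg (hpos _ (by positivity)) h2.le)]
                congr 1
                rw [pow_succ]; field_simp; ring
            _ ≤ _ := by
                refine setLIntegral_mono' measurableSet_Ioo fun t ht => ?_
                apply ENNReal.ofReal_le_ofReal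
                have ht0 : 0 < t := lt_trans (by positivity) ht.1
                have : S.ω ((1 / 2) ^ (k + 1)) ≤ S.ω t :=
                  S.ω_mono (show (0:ℝ) ≤ _ by positivity) ht0.le ht.1.le
                exact div_le_div₀ (hpos _ ht0.le) this ht0 ht.2.le
      _ = ∫⁻ t in ⋃ k, A k, ENNReal.ofReal (S.ω t / t) :=
          (lintegral_iUnion (fun k => measurableSet_Ioo) hdisj _).symm
      _ ≤ _ := lintegral_mono_set hsub
  rw [ENNReal.tsum_mul_right] at key
  by_contra hcon
  rw [not_lt, top_le_iff] at hcon
  rw [hcon, ENNReal.top_mul (by simp)] at key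
  exact absurd hfin (not_lt.2 key)

theorem aux_restrict {d : ℕ} (h : Rd d → ℝ≥0∞) (s : Set (Rd d)) (hs : MeasurableSet s)
    (h0 : ∀ y, y ∉ s → h y = 0) : ∫⁻ y, h y = ∫⁻ y in s, h y := by
  rw [← lintegral_indicator hs]
  congr 1
  funext y
  by_cases hy : y ∈ s
  · rw [indicator_of_mem hy]
  · rw [indicator_of_notMem hy, h0 y hy]

theorem aux_avg (d : ℕ) (r : ℝ) (hr : 1 < r) : ∃ C : ℝ≥0∞, C ≠ ⊤ ∧
    ∀ (x : Rd d) (g : Rd d → ℝ), Measurable g → ∀ M : ℝ≥0∞,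
    (∀ R : ℝ, 0 < R → ∫⁻ y in Metric.ball x R, ‖g y‖ₑ ^ r ≤ M * ENNReal.ofReal (R ^ d)) →
    ∀ R : ℝ, 0 < R → ∫⁻ y in Metric.ball x R, ‖g y‖ₑ ≤ C * M ^ (1 / r) * ENNReal.ofReal (R ^ d) := by
  have hr0 : 0 < r := by linarith
  set κ : ℝ≥0∞ := volume (Metric.ball (0 : Rd d) 1) with hκ
  refine ⟨(κ ^ (r - 1)) ^ (1 / r), ?_, ?_⟩
  · have : κ ≠ ⊤ := measure_ball_lt_top.ne
    refine (ENNReal.rpow_lt_top_of_nonneg (by positivity) ?_).ne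
    exact (ENNReal.rpow_lt_top_of_nonneg (by linarith) this).ne
  intro x g hg M hM R hR
  have h := aux_holder (volume.restrict (Metric.ball x R)) r hr (fun y => ‖g y‖ₑ) (fun _ => 1)
    (by fun_prop) measurable_const
  simp only [mul_one, lintegral_const, Measure.restrict_apply_univ, one_mul] at h
  have hvol : volume (Metric.ball x R) = ENNReal.ofReal (R ^ d) * κ := by
    rw [Measure.addHaar_ball_of_pos _ _ hR]; simp [hκ]
  rw [hvol] at h
  have h2 : (∫⁻ y in Metric.ball x R, ‖g y‖ₑ) ^ r
      ≤ (κ ^ (r - 1) * M) * ENNReal.ofReal (R ^ d) ^ r := by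
    refine h.trans ?_
    calc _ ≤ M * ENNReal.ofReal (R ^ d) * (ENNReal.ofReal (R ^ d) * κ) ^ (r - 1) := by
          gcongr; exact hM R hR
      _ = _ := by
          rw [ENNReal.mul_rpow_of_nonneg _ _ (by linarith)]
          have : ENNReal.ofReal (R ^ d) ^ r
              = ENNReal.ofReal (R ^ d) * ENNReal.ofReal (R ^ d) ^ (r - 1) := by
            nth_rw 2 [← ENNReal.rpow_one (ENNReal.ofReal (R ^ d))]
            rw [← ENNReal.rpow_add_of_nonneg _ _ (by norm_num) (by linarith)]
            congr 1; ring
          rw [this]; ring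
  have h3 := ENNReal.rpow_le_rpow h2 (show 0 ≤ 1 / r by positivity)
  rw [ENNReal.mul_rpow_of_nonneg _ _ (by positivity),
    ENNReal.mul_rpow_of_nonneg _ _ (by positivity), ← ENNReal.rpow_mul,
    ← ENNReal.rpow_mul (ENNReal.ofReal _)] at h3
  have h1 : r * (1 / r) = 1 := by field_simp
  rwa [h1, ENNReal.rpow_one, ENNReal.rpow_one] at h3

theorem aux_b (d : ℕ) (S : CZO d) (r : ℝ) (hr : 1 < r) : ∃ C : ℝ≥0∞, C ≠ ⊤ ∧
    ∀ (x ξ : Rd d) (D : ℝ), 0 < D → dist x ξ ≤ D → ∀ g : Rd d → ℝ, Measurable g → ∀ M : ℝ≥0∞,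
    (∀ R : ℝ, 0 < R → ∫⁻ y in Metric.ball x R, ‖g y‖ₑ ^ r ≤ M * ENNReal.ofReal (R ^ d)) →
    ∫⁻ y in {y | 9 * D ≤ dist x y}, ‖g y‖ₑ * ‖S.K ξ y - S.K x y‖ₑ ≤ C * M ^ (1 / r) := by
  obtain ⟨C, hC, h⟩ := aux_avg d r hr
  refine ⟨C * ENNReal.ofReal (2 ^ d) *
    (ENNReal.ofReal S.Cst * ∑' k : ℕ, ENNReal.ofReal (S.ω ((1 / 2) ^ (k + 1)))), ?_, ?_⟩
  · exact ENNReal.mul_ne_top (ENNReal.mul_ne_top hC ENNReal.ofReal_ne_top)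
      (ENNReal.mul_ne_top ENNReal.ofReal_ne_top (aux_dini S).ne)
  intro x ξ D hD hxξ g hg M hM
  have h1 := aux_dyadic d x (fun y => ‖g y‖ₑ) (fun y => ‖S.K ξ y - S.K x y‖ₑ) (C * M ^ (1 / r))
    (h x g hg M hM) (9 * D) (by positivity)
    (fun k => ENNReal.ofReal S.Cst * ENNReal.ofReal (S.ω ((1 / 2) ^ (k + 1))))
    (fun k => ENNReal.mul_ne_top ENNReal.ofReal_ne_top ENNReal.ofReal_ne_top) ?_
  · refine h1.trans (le_of_eq ?_)
    rw [ENNReal.tsum_mul_left]; ring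
  intro k y hy1 hy2
  have hk : (1 : ℝ) ≤ 2 ^ k := one_le_pow₀ (by norm_num)
  have hp : 0 < 2 ^ k * (9 * D) := by positivity
  have hu : 0 < dist x y := lt_of_lt_of_le hp hy1
  have hne : x ≠ y := dist_pos.1 hu
  have h9 : 9 * D ≤ dist x y := by nlinarith
  have hs := S.smooth x ξ y hne (by linarith)
  have hω : S.ω (dist x ξ / dist x y) ≤ S.ω ((1 / 2) ^ (k + 1)) := by
    apply S.ω_mono
    · exact div_nonneg dist_nonneg dist_nonneg
    · show (0 : ℝ) ≤ _; positivity
    · rw [div_le_iff₀ hu]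
      calc dist x ξ ≤ D := hxξ
        _ ≤ (1 / 2) ^ (k + 1) * (2 ^ k * (9 * D)) := by
            have : ((1 : ℝ) / 2) ^ (k + 1) * (2 ^ k * (9 * D)) = 9 * D / 2 := by
              rw [pow_succ, one_div, inv_pow]; field_simp
            rw [this]; linarith
        _ ≤ _ := by gcongr
  have hω0 : 0 ≤ S.ω ((1 / 2) ^ (k + 1)) := by
    have h2 : (0 : ℝ) ≤ (1 / 2) ^ (k + 1) := by positivity
    have := S.ω_mono (by simp) (show (1 / 2 : ℝ) ^ (k + 1) ∈ Ici (0 : ℝ) from h2) h2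
    rwa [S.ω_zero] at this
  rw [← ENNReal.ofReal_mul S.hCst.le, ← ENNReal.ofReal_mul (mul_nonneg S.hCst.le hω0),
    Real.enorm_eq_ofReal_abs]
  apply ENNReal.ofReal_le_ofReal
  rw [abs_sub_comm]
  calc |S.K x y - S.K ξ y| ≤ S.Cst * S.ω (dist x ξ / dist x y) / dist x y ^ d := by
        linarith [abs_nonneg (S.K y x - S.K y ξ)]
    _ ≤ S.Cst * S.ω ((1 / 2) ^ (k + 1)) / (2 ^ k * (9 * D)) ^ d := by
        have := S.hCst.le
        gcongr
    _ = _ := by rw [div_eq_mul_inv]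

theorem aux_c (d : ℕ) (hd : 0 < d) (S : CZO d) (r : ℝ) (hr : 1 < r) : ∃ C : ℝ≥0∞, C ≠ ⊤ ∧
    ∀ (x : Rd d) (D : ℝ), 0 < D → ∀ g : Rd d → ℝ, Measurable g →
    (∀ y, dist x y < 9 * D → g y = 0) → ∀ M : ℝ≥0∞,
    (∀ R : ℝ, 0 < R → ∫⁻ y in Metric.ball x R, ‖g y‖ₑ ^ r ≤ M * ENNReal.ofReal (R ^ d)) →
    ∀ (A U V : ℕ → Set (Rd d)) (e : ℕ → ℝ), (∀ i, MeasurableSet (A i)) →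
    (∀ i, MeasurableSet (U i)) → (∀ i, MeasurableSet (V i)) →
    Pairwise (Function.onFun Disjoint U) → Pairwise (Function.onFun Disjoint V) →
    (∀ i, A i ⊆ U i ∪ V i) →
    (∀ i, ∀ y ∈ A i, |dist x y - e i| ≤ D ∨ |dist x y - e (i + 1)| ≤ D) →
    (∑' i, (∫⁻ y in A i, ‖g y‖ₑ * ‖S.K x y‖ₑ) ^ r) ^ (1 / r) ≤ C * M ^ (1 / r) := by
  obtain ⟨c, hc, hshell⟩ := aux_shell d hd
  have hr0 : 0 < r := by linarith
  have hr1 : 0 < r - 1 := by linarith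
  set c3 : ℝ := S.Cst ^ r * (4 * c) ^ (r - 1) with hc3
  have hc30 : 0 ≤ c3 := by have := S.hCst.le; positivity
  set θ : ℝ≥0∞ := ENNReal.ofReal ((1 / 2) ^ (r - 1)) with hθ
  have hθ1 : θ < 1 := by
    rw [hθ, ENNReal.ofReal_lt_one]
    exact Real.rpow_lt_one (by norm_num) (by norm_num) hr1
  set a : ℕ → ℝ≥0∞ := fun k => ENNReal.ofReal c3 * θ ^ k with ha
  have hasum : ∑' k, a k ≠ ⊤ := by
    rw [ha, ENNReal.tsum_mul_left, ENNReal.tsum_geometric]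
    refine ENNReal.mul_ne_top ENNReal.ofReal_ne_top ?_
    rw [ne_eq, ENNReal.inv_eq_top, tsub_eq_zero_iff_le, not_le]
    exact hθ1
  refine ⟨(2 * (ENNReal.ofReal (2 ^ d) * ∑' k, a k)) ^ (1 / r), ?_, ?_⟩
  · refine (ENNReal.rpow_lt_top_of_nonneg (by positivity) ?_).ne
    exact ENNReal.mul_ne_top (by simp) (ENNReal.mul_ne_top ENNReal.ofReal_ne_top hasum)
  intro x D hD g hg hg0 M hM A U V e hA hU hV hUd hVd hAUV hAe
  have hdm : Measurable (fun y : Rd d => dist x y) := measurable_const.dist measurable_id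
  set v : Rd d → ℝ≥0∞ := fun y => ENNReal.ofReal ((dist x y ^ (d - 1))⁻¹) with hv
  set H : Rd d → ℝ≥0∞ := fun y => ‖g y‖ₑ * ENNReal.ofReal (S.Cst / dist x y) with hH
  have hvm : Measurable v := by
    exact ((hdm.pow_const _).inv).ennreal_ofReal
  have hHm : Measurable H := by
    exact (hg.enorm).mul ((measurable_const.div hdm).ennreal_ofReal)
  set P : Set (Rd d) := {y | 9 * D ≤ dist x y} with hP
  have hPm : MeasurableSet P := measurableSet_le measurable_const hdm
  set L : ℝ≥0∞ := ENNReal.ofReal (4 * c * D) ^ (r - 1) with hL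
  have hPpos : ∀ y ∈ P, 0 < dist x y := fun y hy =>
    lt_of_lt_of_le (by positivity : 0 < 9 * D) hy
  have hoff : ∀ y, y ∉ P → g y = 0 := fun y hy => hg0 y (not_le.1 hy)
  -- the weight on each piece
  have hpiece : ∀ i, (∫⁻ y in A i, ‖g y‖ₑ * ‖S.K x y‖ₑ) ^ r ≤
      (∫⁻ y in A i, H y ^ r * v y) * L := by
    intro i
    have e1 : ∫⁻ y in A i, ‖g y‖ₑ * ‖S.K x y‖ₑ ≤ ∫⁻ y in A i ∩ P, H y * v y := by
      rw [← lintegral_indicator (hA i), ← lintegral_indicator ((hA i).inter hPm)]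
      refine lintegral_mono fun y => ?_
      by_cases hyA : y ∈ A i
      · by_cases hyP : y ∈ P
        · rw [indicator_of_mem hyA, indicator_of_mem (show y ∈ A i ∩ P from ⟨hyA, hyP⟩)]
          simp only [hH, hv]
          rw [mul_assoc]
          gcongr
          have hu := hPpos y hyP
          rw [← ENNReal.ofReal_mul (div_nonneg S.hCst.le hu.le), Real.enorm_eq_ofReal_abs]
          apply ENNReal.ofReal_le_ofReal
          refine (S.size x y (dist_pos.1 hu)).trans (le_of_eq ?_)
          obtain ⟨n, rfl⟩ : ∃ n, d = n + 1 := ⟨d - 1, by omega⟩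
          simp only [Nat.add_sub_cancel]
          rw [pow_succ]; field_simp
        · rw [indicator_of_mem hyA, hoff y hyP]; simp
      · rw [indicator_of_notMem hyA]; exact bot_le
    have e2 : ∫⁻ y in A i ∩ P, v y ≤ ENNReal.ofReal (4 * c * D) := by
      have hsub : A i ∩ P ⊆ {y | e i - D ≤ dist x y ∧ dist x y ≤ e i + D ∧ 0 < dist x y} ∪
          {y | e (i + 1) - D ≤ dist x y ∧ dist x y ≤ e (i + 1) + D ∧ 0 < dist x y} := by
        intro y hy
        have hu := hPpos y hy.2
        rcases hAe i y hy.1 with h | h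
        · left; rw [abs_le] at h; exact ⟨by linarith, by linarith, hu⟩
        · right; rw [abs_le] at h; exact ⟨by linarith, by linarith, hu⟩
      refine (lintegral_mono_set hsub).trans ((lintegral_union_le _ _ _).trans ?_)
      refine (add_le_add (hshell x (e i - D) (e i + D) (by linarith))
        (hshell x (e (i + 1) - D) (e (i + 1) + D) (by linarith))).trans ?_
      rw [← ENNReal.ofReal_add]
      · apply ENNReal.ofReal_le_ofReal; apply le_of_eq; ring
      · have : 0 ≤ e i + D - (e i - D) := by linarith
        positivity
      · have : 0 ≤ e (i + 1) + D - (e (i + 1) - D) := by linarith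
        positivity
    calc _ ≤ (∫⁻ y in A i ∩ P, H y * v y) ^ r := by gcongr
      _ ≤ (∫⁻ y in A i ∩ P, H y ^ r * v y) * (∫⁻ y in A i ∩ P, v y) ^ (r - 1) :=
          aux_holder _ r hr H v hHm hvm
      _ ≤ _ := by
          rw [hL]
          gcongr
          exact inter_subset_left
  have hsumA : ∑' i, ∫⁻ y in A i, H y ^ r * v y ≤ 2 * ∫⁻ y in P, H y ^ r * v y := by
    have hfull : ∫⁻ y, H y ^ r * v y = ∫⁻ y in P, H y ^ r * v y := by
      apply aux_restrict _ _ hPm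
      intro y hy
      simp [hH, hoff y hy, hr0]
    have hone : ∀ W : ℕ → Set (Rd d), (∀ i, MeasurableSet (W i)) →
        Pairwise (Function.onFun Disjoint W) →
        ∑' i, ∫⁻ y in W i, H y ^ r * v y ≤ ∫⁻ y in P, H y ^ r * v y := by
      intro W hW hWd
      rw [← lintegral_iUnion hW hWd, ← hfull]
      exact setLIntegral_le_lintegral _ _
    calc _ ≤ ∑' i, ((∫⁻ y in U i, H y ^ r * v y) + ∫⁻ y in V i, H y ^ r * v y) := by
          refine ENNReal.tsum_le_tsum fun i => ?_
          exact (lintegral_mono_set (hAUV i)).trans (lintegral_union_le _ _ _)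
      _ = _ := ENNReal.tsum_add
      _ ≤ _ := add_le_add (hone U hU hUd) (hone V hV hVd)
      _ = _ := by rw [two_mul]
  have hdy := aux_dyadic d x (fun y => ‖g y‖ₑ ^ r)
    (fun y => ENNReal.ofReal (S.Cst / dist x y) ^ r * v y * L) M hM (9 * D) (by positivity) a
    (fun k => ENNReal.ne_top_of_tsum_ne_top hasum k) ?_
  · have hfin : ∑' i, (∫⁻ y in A i, ‖g y‖ₑ * ‖S.K x y‖ₑ) ^ r ≤
        (2 * (ENNReal.ofReal (2 ^ d) * ∑' k, a k)) * M := by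
      calc _ ≤ ∑' i, (∫⁻ y in A i, H y ^ r * v y) * L := ENNReal.tsum_le_tsum hpiece
        _ = (∑' i, ∫⁻ y in A i, H y ^ r * v y) * L := ENNReal.tsum_mul_right
        _ ≤ (2 * ∫⁻ y in P, H y ^ r * v y) * L := by gcongr
        _ = 2 * ∫⁻ y in P, ‖g y‖ₑ ^ r * (ENNReal.ofReal (S.Cst / dist x y) ^ r * v y * L) := by
            rw [mul_assoc, ← lintegral_mul_const' _ _
              (ENNReal.rpow_lt_top_of_nonneg hr1.le ENNReal.ofReal_ne_top).ne]
            congr 2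
            funext y
            simp only [hH]
            rw [ENNReal.mul_rpow_of_nonneg _ _ hr0.le]; ring
        _ ≤ 2 * (M * ENNReal.ofReal (2 ^ d) * ∑' k, a k) := by gcongr
        _ = _ := by ring
    refine (ENNReal.rpow_le_rpow hfin (by positivity : 0 ≤ 1 / r)).trans (le_of_eq ?_)
    rw [ENNReal.mul_rpow_of_nonneg _ _ (by positivity)]
  intro k y hy1 hy2
  have hk : (1 : ℝ) ≤ 2 ^ k := one_le_pow₀ (by norm_num)
  have hp : 0 < 2 ^ k * (9 * D) := by positivity
  have hu : 0 < dist x y := lt_of_lt_of_le hp hy1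
  have hC := S.hCst
  simp only [hv, hL, ha, hθ]
  rw [ENNReal.ofReal_rpow_of_nonneg (by positivity) hr0.le,
    ENNReal.ofReal_rpow_of_nonneg (by positivity) hr1.le, ← ENNReal.ofReal_mul (by positivity),
    ← ENNReal.ofReal_mul (by positivity), ← ENNReal.ofReal_pow (by positivity),
    ← ENNReal.ofReal_mul (by positivity), ← ENNReal.ofReal_mul (by positivity)]
  apply ENNReal.ofReal_le_ofReal
  have hDu : D / dist x y ≤ (1 / 2) ^ k := by
    rw [div_le_iff₀ hu]
    calc D ≤ (1 / 2) ^ k * (2 ^ k * (9 * D)) := by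
          have : ((1 : ℝ) / 2) ^ k * (2 ^ k * (9 * D)) = 9 * D := by
            rw [one_div, inv_pow]; field_simp
          rw [this]; linarith
      _ ≤ _ := by gcongr
  have hpow : (D / dist x y) ^ (r - 1) ≤ ((1 / 2) ^ (r - 1)) ^ k := by
    calc _ ≤ ((1 / 2 : ℝ) ^ k) ^ (r - 1) := by gcongr
      _ = _ := by
          rw [← Real.rpow_natCast, ← Real.rpow_natCast, ← Real.rpow_mul (by norm_num),
            ← Real.rpow_mul (by norm_num), mul_comm]
  calc (S.Cst / dist x y) ^ r * (dist x y ^ (d - 1))⁻¹ * (4 * c * D) ^ (r - 1)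
      = c3 * (D / dist x y) ^ (r - 1) * (dist x y ^ d)⁻¹ := by
        rw [hc3, Real.div_rpow hC.le hu.le, Real.div_rpow hD.le hu.le,
          Real.mul_rpow (by positivity) hD.le]
        have h1 : dist x y ^ r = dist x y ^ (r - 1) * dist x y := by
          nth_rw 3 [← Real.rpow_one (dist x y)]
          rw [← Real.rpow_add hu]; congr 1; ring
        have h2 : dist x y ^ d = dist x y ^ (d - 1) * dist x y := by
          rw [← pow_succ]; congr 1; omega
        rw [h1, h2]
        have : 0 < dist x y ^ (r - 1) := by positivity
        field_simp
    _ ≤ _ := by gcongr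

theorem aux_trunc {d : ℕ} (S : CZO d) (g : Rd d → ℝ) (z : Rd d)
    (hi : Integrable (fun y => S.K z y * g y)) (a b : ℝ) (hab : a ≤ b) :
    S.trunc a g z - S.trunc b g z =
      ∫ y, {y | a < dist z y ∧ dist z y ≤ b}.indicator (fun y => S.K z y * g y) y := by
  have hdm : Measurable (fun y : Rd d => dist z y) := measurable_const.dist measurable_id
  have hm : ∀ t : ℝ, MeasurableSet {y : Rd d | t < dist z y} := fun t =>
    measurableSet_lt measurable_const hdm
  have hset : {y : Rd d | a < dist z y ∧ dist z y ≤ b}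
      = {y | a < dist z y} \ {y | b < dist z y} := by
    ext y; simp
  rw [hset, integral_indicator ((hm a).diff (hm b)), CZO.trunc, CZO.trunc]
  rw [setIntegral_sdiff (hm b) hi.integrableOn]
  intro y hy
  exact lt_of_le_of_lt hab hy

theorem aux_int {d : ℕ} (S : CZO d) (g : Rd d → ℝ) (hg : Integrable g) (z : Rd d) (t : ℝ)
    (ht : 0 < t) (h0 : ∀ y, dist z y < t → g y = 0) : Integrable (fun y => S.K z y * g y) := by
  have hC := S.hCst
  have hKm : Measurable (fun y => S.K z y) := S.measK.comp (measurable_const.prodMk measurable_id)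
  refine Integrable.mono' (hg.norm.const_mul (S.Cst / t ^ d))
    (hKm.aestronglyMeasurable.mul hg.aestronglyMeasurable) (Eventually.of_forall fun y => ?_)
  rcases lt_or_ge (dist z y) t with h | h
  · simp [h0 y h]
  · rw [norm_mul]
    gcongr
    rw [Real.norm_eq_abs]
    refine (S.size z y (dist_pos.1 (lt_of_lt_of_le ht h))).trans ?_
    gcongr

theorem aux_disj {d : ℕ} (z : Rd d) (ε : ℕ → ℝ) (hε : StrictAnti ε) :
    Pairwise (Function.onFun Disjoint (fun i => {y : Rd d | ε (i + 1) < dist z y ∧ dist z y ≤ ε i})) := by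
  have : ∀ i j, i < j → Disjoint {y : Rd d | ε (i + 1) < dist z y ∧ dist z y ≤ ε i}
      {y : Rd d | ε (j + 1) < dist z y ∧ dist z y ≤ ε j} := by
    intro i j hij
    rw [Set.disjoint_left]
    intro y h1 h2
    have h3 : ε j ≤ ε (i + 1) := hε.antitone hij
    exact absurd (h1.1.trans_le h2.2) (not_lt.2 h3)
  intro i j hij
  rcases lt_or_gt_of_ne hij with h | h
  · exact this i j h
  · exact (this j i h).symm

theorem aux_core (d : ℕ) (hd : 0 < d) (S : CZO d) (ρ r : ℝ) (hr : 1 < r) (hrρ : r < ρ) :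
    ∃ C : ℝ≥0∞, C ≠ ⊤ ∧
    ∀ (x ξ : Rd d) (D : ℝ), 0 < D → dist x ξ ≤ D → ∀ g : Rd d → ℝ, Measurable g →
    Integrable g → (∀ y, dist x y < 9 * D → g y = 0) → ∀ M : ℝ≥0∞,
    (∀ R : ℝ, 0 < R → ∫⁻ y in Metric.ball x R, ‖g y‖ₑ ^ r ≤ M * ENNReal.ofReal (R ^ d)) →
    ∀ ε : ℕ → ℝ, StrictAnti ε →
    (∑' i, ENNReal.ofReal |(S.trunc (ε (i + 1)) g ξ - S.trunc (ε i) g ξ) -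
      (S.trunc (ε (i + 1)) g x - S.trunc (ε i) g x)| ^ ρ) ^ (1 / ρ) ≤ C * M ^ (1 / r) := by
  obtain ⟨Cb, hCb, hb⟩ := aux_b d S r hr
  obtain ⟨Cc, hCc, hc⟩ := aux_c d hd S r hr
  refine ⟨Cb + Cc, ENNReal.add_ne_top.2 ⟨hCb, hCc⟩, ?_⟩
  intro x ξ D hD hxξ g hg hgi hg0 M hM ε hε
  have hρ0 : 0 < ρ := by linarith
  have hdm : ∀ z, Measurable (fun y : Rd d => dist z y) :=
    fun z => measurable_const.dist measurable_id
  have hKm : ∀ z, Measurable (fun y => S.K z y) :=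
    fun z => S.measK.comp (measurable_const.prodMk measurable_id)
  set U : ℕ → Set (Rd d) := fun i => {y : Rd d | ε (i + 1) < dist x y ∧ dist x y ≤ ε i} with hU
  set V : ℕ → Set (Rd d) := fun i => {y : Rd d | ε (i + 1) < dist ξ y ∧ dist ξ y ≤ ε i} with hV
  have hUm : ∀ i, MeasurableSet (U i) := fun i =>
    (measurableSet_lt measurable_const (hdm x)).inter (measurableSet_le (hdm x) measurable_const)
  have hVm : ∀ i, MeasurableSet (V i) := fun i =>
    (measurableSet_lt measurable_const (hdm ξ)).inter (measurableSet_le (hdm ξ) measurable_const)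
  set A : ℕ → Set (Rd d) := fun i => (U i \ V i) ∪ (V i \ U i) with hA
  have hAm : ∀ i, MeasurableSet (A i) := fun i =>
    ((hUm i).diff (hVm i)).union ((hVm i).diff (hUm i))
  have hix : Integrable (fun y => S.K x y * g y) := aux_int S g hgi x (9 * D) (by positivity) hg0
  have hiξ : Integrable (fun y => S.K ξ y * g y) := by
    refine aux_int S g hgi ξ (8 * D) (by positivity) fun y hy => hg0 y ?_
    linarith [dist_triangle x ξ y]
  have hkey : ∀ i, ENNReal.ofReal |(S.trunc (ε (i + 1)) g ξ - S.trunc (ε i) g ξ) -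
      (S.trunc (ε (i + 1)) g x - S.trunc (ε i) g x)| ≤
      (∫⁻ y in V i, ‖g y‖ₑ * ‖S.K ξ y - S.K x y‖ₑ) + ∫⁻ y in A i, ‖g y‖ₑ * ‖S.K x y‖ₑ := by
    intro i
    have hle : ε (i + 1) ≤ ε i := (hε (Nat.lt_succ_self i)).le
    rw [aux_trunc S g ξ hiξ _ _ hle, aux_trunc S g x hix _ _ hle,
      ← integral_sub (hiξ.indicator (hVm i)) (hix.indicator (hUm i)), ← Real.enorm_eq_ofReal_abs]
    refine (enorm_integral_le_lintegral_enorm _).trans ?_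
    rw [← lintegral_indicator (hVm i), ← lintegral_indicator (hAm i), ← lintegral_add_left]
    · refine lintegral_mono fun y => ?_
      change ‖(V i).indicator (fun y => S.K ξ y * g y) y - (U i).indicator (fun y => S.K x y * g y) y‖ₑ
        ≤ _
      by_cases hyU : y ∈ U i <;> by_cases hyV : y ∈ V i
      · have hyA : y ∉ A i := by simp [hA, hyU, hyV]
        simp only [indicator_of_mem hyU, indicator_of_mem hyV, indicator_of_notMem hyA]
        rw [← sub_mul, enorm_mul, mul_comm, add_zero]
      · have hyA : y ∈ A i := by simp [hA, hyU, hyV]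
        simp only [indicator_of_mem hyU, indicator_of_notMem hyV, indicator_of_mem hyA]
        rw [zero_sub, enorm_neg, enorm_mul, mul_comm, zero_add]
      · have hyA : y ∈ A i := by simp [hA, hyU, hyV]
        simp only [indicator_of_notMem hyU, indicator_of_mem hyV, indicator_of_mem hyA]
        rw [sub_zero, enorm_mul, ← mul_add, mul_comm]
        gcongr
        calc ‖S.K ξ y‖ₑ = ‖(S.K ξ y - S.K x y) + S.K x y‖ₑ := by rw [sub_add_cancel]
          _ ≤ _ := enorm_add_le _ _
      · simp only [indicator_of_notMem hyU, indicator_of_notMem hyV]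
        simp
    · exact (hg.enorm.mul ((hKm ξ).sub (hKm x)).enorm).indicator (hVm i)
  have hAe : ∀ i, ∀ y ∈ A i, |dist x y - ε i| ≤ D ∨ |dist x y - ε (i + 1)| ≤ D := by
    intro i y hy
    have h1 := dist_triangle x ξ y
    have h2 := dist_triangle ξ x y
    rw [dist_comm ξ x] at h2
    rw [abs_le, abs_le]
    rcases hy with ⟨⟨ha, hb⟩, hn⟩ | ⟨⟨ha, hb⟩, hn⟩
    · have hn' : ¬ (ε (i + 1) < dist ξ y ∧ dist ξ y ≤ ε i) := hn
      by_cases h3 : ε (i + 1) < dist ξ y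
      · have h4 : ε i < dist ξ y := not_le.1 fun h => hn' ⟨h3, h⟩
        left; constructor <;> linarith
      · right; constructor <;> linarith
    · have hn' : ¬ (ε (i + 1) < dist x y ∧ dist x y ≤ ε i) := hn
      by_cases h3 : ε (i + 1) < dist x y
      · have h4 : ε i < dist x y := not_le.1 fun h => hn' ⟨h3, h⟩
        left; constructor <;> linarith
      · right; constructor <;> linarith
  have hUd := aux_disj x ε hε
  have hVd := aux_disj ξ ε hε
  have hc' := hc x D hD g hg hg0 M hM A U V ε hAm hUm hVm hUd hVd
    (fun i => union_subset_union sdiff_subset sdiff_subset) hAe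
  have hb' := hb x ξ D hD hxξ g hg M hM
  have hbsum : ∑' i, ∫⁻ y in V i, ‖g y‖ₑ * ‖S.K ξ y - S.K x y‖ₑ ≤ Cb * M ^ (1 / r) := by
    rw [← lintegral_iUnion hVm hVd]
    refine (setLIntegral_le_lintegral _ _).trans ?_
    rw [aux_restrict _ {y | 9 * D ≤ dist x y} (measurableSet_le measurable_const (hdm x))]
    · exact hb'
    · intro y hy
      rw [hg0 y (not_le.1 hy)]; simp
  calc _ ≤ (∑' i, ((∫⁻ y in V i, ‖g y‖ₑ * ‖S.K ξ y - S.K x y‖ₑ) +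
        ∫⁻ y in A i, ‖g y‖ₑ * ‖S.K x y‖ₑ) ^ ρ) ^ (1 / ρ) := by
        gcongr with i
        exact hkey i
    _ ≤ _ := aux_minkowski ρ (by linarith) _ _
    _ ≤ Cb * M ^ (1 / r) + Cc * M ^ (1 / r) := by
        refine add_le_add ?_ ?_
        · refine (aux_ell 1 ρ one_pos (by linarith) _).trans ?_
          simpa using hbsum
        · exact (aux_ell r ρ (by linarith) hrρ.le _).trans hc'
    _ = _ := by rw [add_mul]

theorem aux_var {d : ℕ} (S : CZO d) (ρ : ℝ) (hρ : 1 ≤ ρ) (g : Rd d → ℝ) (z w : Rd d) (E : ℝ≥0∞)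
    (h : ∀ ε : ℕ → ℝ, StrictAnti ε →
    (∑' i, ENNReal.ofReal |(S.trunc (ε (i + 1)) g z - S.trunc (ε i) g z) -
      (S.trunc (ε (i + 1)) g w - S.trunc (ε i) g w)| ^ ρ) ^ (1 / ρ) ≤ E) :
    S.var ρ g z ≤ S.var ρ g w + E := by
  have hρ0 : 0 < ρ := by linarith
  refine iSup₂_le fun ε hε => ?_
  have h1 : (∑' i : ℕ, ENNReal.ofReal |S.trunc (ε (i + 1)) g w - S.trunc (ε i) g w| ^ ρ) ^ (1 / ρ)
      ≤ S.var ρ g w :=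
    le_iSup₂ (f := fun (ε : ℕ → ℝ) (_ : StrictAnti ε ∧ (∀ i, 0 < ε i) ∧
      Tendsto ε atTop (nhds 0)) =>
      (∑' i : ℕ, ENNReal.ofReal |S.trunc (ε (i + 1)) g w - S.trunc (ε i) g w| ^ ρ) ^ (1 / ρ)) ε hε
  refine le_trans ?_ (add_le_add h1 (h ε hε.1))
  refine le_trans ?_ (aux_minkowski ρ hρ _ _)
  gcongr with i
  rw [← ENNReal.ofReal_add (abs_nonneg _) (abs_nonneg _)]
  apply ENNReal.ofReal_le_ofReal
  set p := S.trunc (ε (i + 1)) g z - S.trunc (ε i) g z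
  set q := S.trunc (ε (i + 1)) g w - S.trunc (ε i) g w
  calc |p| = |q + (p - q)| := by congr 1; ring
    _ ≤ _ := abs_add_le _ _

theorem aux_dist {d : ℕ} (x y : Rd d) (t : ℝ) (ht : 0 ≤ t) (h : ∀ i, |x i - y i| ≤ t) :
    dist x y ≤ d * t := by
  rw [EuclideanSpace.dist_eq]
  apply Real.sqrt_le_iff.2
  refine ⟨by positivity, ?_⟩
  calc ∑ i, dist (x i) (y i) ^ 2 ≤ ∑ _i : Fin d, t ^ 2 := by
        refine Finset.sum_le_sum fun i _ => ?_
        rw [Real.dist_eq]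
        have := h i
        gcongr
    _ = d * t ^ 2 := by simp
    _ ≤ (d * t) ^ 2 := by
        rw [mul_pow]
        gcongr
        have : (d : ℝ) ≤ (d : ℝ) ^ 2 := by exact_mod_cast Nat.le_self_pow (by norm_num) d
        exact this

theorem aux_max {d : ℕ} (h : Rd d → ℝ) (x : Rd d) (R : ℝ) (hR : 0 < R) :
    ∫⁻ y in Metric.ball x R, ENNReal.ofReal |h y| ≤
      ENNReal.ofReal (2 ^ d) * maxCube h x * ENNReal.ofReal (R ^ d) := by
  set Q : Cube d := ⟨fun i => x i, 2 * R, by positivity⟩ with hQ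
  have hx : x ∈ Q.set := by
    intro i; simp only [hQ]; constructor <;> linarith
  have hsub : Metric.ball x R ⊆ Q.set := by
    intro y hy i
    have h1 : |y i - x i| ≤ dist y x := by
      rw [dist_eq_norm]
      simpa using PiLp.norm_apply_le (y - x) i
    have h2 : |y i - x i| < R := lt_of_le_of_lt h1 hy
    rw [abs_lt] at h2
    simp only [hQ]; constructor <;> linarith
  have hv0 : Q.vol ≠ 0 := by
    simp only [Cube.vol, hQ]; rw [ne_eq, ENNReal.ofReal_eq_zero, not_le]; positivity
  have hv1 : Q.vol ≠ ⊤ := ENNReal.ofReal_ne_top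
  have hmax : Q.vol⁻¹ * ∫⁻ y in Q.set, ENNReal.ofReal |h y| ≤ maxCube h x :=
    le_iSup₂ (f := fun (Q : Cube d) (_ : x ∈ Q.set) =>
      Q.vol⁻¹ * ∫⁻ y in Q.set, ENNReal.ofReal |h y|) Q hx
  calc _ ≤ ∫⁻ y in Q.set, ENNReal.ofReal |h y| := lintegral_mono_set hsub
    _ = Q.vol * (Q.vol⁻¹ * ∫⁻ y in Q.set, ENNReal.ofReal |h y|) := by
        rw [← mul_assoc, ENNReal.mul_inv_cancel hv0 hv1, one_mul]
    _ ≤ Q.vol * maxCube h x := by gcongr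
    _ = _ := by
        have : Q.vol = ENNReal.ofReal (2 ^ d) * ENNReal.ofReal (R ^ d) := by
          rw [← ENNReal.ofReal_mul (by positivity), ← mul_pow]; rfl
        rw [this]; ring

/-- Oscillation estimate for the variation of the truncation of `f` outside
`B_x = B(x, 9d·ℓ(Q))`, in terms of the Hardy–Littlewood maximal function. -/
theorem variation_oscillation_bound
    (d : ℕ) (hd : 0 < d) (S : CZO d) (ρ q : ℝ) (hρ : 2 < ρ) (hq : 1 < q)
    (hbdd : S.VarBdd ρ q) (r : ℝ) (hr : 1 < r) (hrq : r < q) (hrρ : r < ρ) :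
    ∃ C : ℝ, 0 < C ∧ ∀ (Q₀ Q : Cube d) (x : Rd d), x ∈ Q₀.set → x ∈ Q.set →
      Q.set ⊆ Q₀.set → ∀ ξ ∈ Q.set, ∀ f : Rd d → ℝ, Measurable f →
      (∫⁻ y, ENNReal.ofReal |f y| ^ q ∂volume) ≠ ⊤ →
      (S.var ρ ((Q₀.dilate 3 \ Metric.ball x (9 * (d : ℝ) * Q.l)).indicator f) ξ ≤
          S.var ρ ((Q₀.dilate 3 \ Metric.ball x (9 * (d : ℝ) * Q.l)).indicator f) x +
            ENNReal.ofReal C * maxCube (fun y => |f y| ^ r) x ^ (1 / r)) ∧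
      (S.var ρ ((Q₀.dilate 3 \ Metric.ball x (9 * (d : ℝ) * Q.l)).indicator f) x ≤
          S.var ρ ((Q₀.dilate 3 \ Metric.ball x (9 * (d : ℝ) * Q.l)).indicator f) ξ +
            ENNReal.ofReal C * maxCube (fun y => |f y| ^ r) x ^ (1 / r)) := by
  obtain ⟨C, hC, hcore⟩ := aux_core d hd S ρ r hr hrρ
  obtain ⟨Ca, hCa, havg⟩ := aux_avg d r hr
  have hr0 : 0 < r := by linarith
  set C' : ℝ≥0∞ := C * ENNReal.ofReal (2 ^ d) ^ (1 / r) with hC'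
  have hC't : C' ≠ ⊤ := ENNReal.mul_ne_top hC
    (ENNReal.rpow_lt_top_of_nonneg (by positivity) ENNReal.ofReal_ne_top).ne
  refine ⟨C'.toReal + 1, by positivity, ?_⟩
  intro Q₀ Q x hx₀ hx hQQ ξ hξ f hf _
  set g : Rd d → ℝ := (Q₀.dilate 3 \ Metric.ball x (9 * (d : ℝ) * Q.l)).indicator f with hg
  set m : ℝ≥0∞ := maxCube (fun y => |f y| ^ r) x with hm
  by_cases hmt : m = ⊤
  · have : ENNReal.ofReal (C'.toReal + 1) * m ^ (1 / r) = ⊤ := by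
      rw [hmt, ENNReal.top_rpow_of_pos (by positivity), ENNReal.mul_top]
      rw [ne_eq, ENNReal.ofReal_eq_zero, not_le]; positivity
    rw [this]; simp
  have hl := Q.hl
  have hl₀ := Q₀.hl
  have hd' : (0 : ℝ) < d := by exact_mod_cast hd
  have hD : 0 < (d : ℝ) * Q.l := by positivity
  have hxξ : dist x ξ ≤ d * Q.l := by
    refine aux_dist x ξ Q.l hl.le fun i => ?_
    have h1 := hx i
    have h2 := hξ i
    rw [abs_le]; constructor <;> linarith
  have hcoord : ∀ i, Measurable (fun y : Rd d => y i) := fun i => by fun_prop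
  have hdil : MeasurableSet (Q₀.dilate 3) := by
    have : Q₀.dilate 3 = ⋂ i, {y : Rd d | Q₀.c i - 3 * Q₀.l / 2 ≤ y i ∧
        y i < Q₀.c i + 3 * Q₀.l / 2} := by
      ext y; simp [Cube.dilate]
    rw [this]
    exact MeasurableSet.iInter fun i => (measurableSet_le measurable_const (hcoord i)).inter
      (measurableSet_lt (hcoord i) measurable_const)
  have hgm : Measurable g := hf.indicator (hdil.diff measurableSet_ball)
  have hg0 : ∀ y, dist x y < 9 * (d * Q.l) → g y = 0 := by
    intro y hy
    refine indicator_of_notMem ?_ _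
    intro h
    apply h.2
    rw [Metric.mem_ball, dist_comm]; linarith
  have hM : ∀ R : ℝ, 0 < R → ∫⁻ y in Metric.ball x R, ‖g y‖ₑ ^ r ≤
      (ENNReal.ofReal (2 ^ d) * m) * ENNReal.ofReal (R ^ d) := by
    intro R hR
    refine le_trans ?_ (aux_max (fun y => |f y| ^ r) x R hR)
    refine lintegral_mono fun y => ?_
    change ‖g y‖ₑ ^ r ≤ ENNReal.ofReal |(|f y| ^ r)|
    rw [abs_of_nonneg (by positivity), ← ENNReal.ofReal_rpow_of_nonneg (abs_nonneg _) hr0.le,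
      ← Real.enorm_eq_ofReal_abs]
    gcongr
    exact enorm_indicator_le_enorm_self _ _
  have hMt : ENNReal.ofReal (2 ^ d) * m ≠ ⊤ := ENNReal.mul_ne_top ENNReal.ofReal_ne_top hmt
  have hgi : Integrable g := by
    refine ⟨hgm.aestronglyMeasurable, ?_⟩
    rw [HasFiniteIntegral, aux_restrict _ (Metric.ball x (d * (2 * Q₀.l) + 1)) measurableSet_ball]
    · refine lt_of_le_of_lt (havg x g hgm _ hM _ (by positivity)) ?_
      refine (ENNReal.mul_ne_top (ENNReal.mul_ne_top hCa ?_) ENNReal.ofReal_ne_top).lt_top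
      exact (ENNReal.rpow_lt_top_of_nonneg (by positivity) hMt).ne
    · intro y hy
      have : g y = 0 := by
        refine indicator_of_notMem ?_ _
        intro h
        apply hy
        rw [Metric.mem_ball, dist_comm]
        refine lt_of_le_of_lt (aux_dist x y (2 * Q₀.l) (by positivity) fun i => ?_)
          (lt_add_one _)
        have h1 := hx₀ i
        have h2 := h.1 i
        rw [abs_le]; constructor <;> linarith
      rw [this]; simp
  have hfin := hcore x ξ (d * Q.l) hD hxξ g hgm hgi hg0 _ hM
  have hE : C * (ENNReal.ofReal (2 ^ d) * m) ^ (1 / r) ≤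
      ENNReal.ofReal (C'.toReal + 1) * m ^ (1 / r) := by
    rw [ENNReal.mul_rpow_of_nonneg _ _ (by positivity), ← mul_assoc, ← hC']
    gcongr
    calc C' = ENNReal.ofReal C'.toReal := (ENNReal.ofReal_toReal hC't).symm
      _ ≤ _ := ENNReal.ofReal_le_ofReal (by linarith)
  constructor
  · exact aux_var S ρ (by linarith) g ξ x _ fun ε hε => (hfin ε hε).trans hE
  · refine aux_var S ρ (by linarith) g x ξ _ fun ε hε => le_trans (le_of_eq ?_)
      ((hfin ε hε).trans hE)
    simp only [abs_sub_comm]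
end
end

section
/- Let T be a scalar Calderón–Zygmund operator on ℝ^d with modulus of continuity ω satisfying the Dini condition, let ρ ∈ (2,∞), assume V_ρ(T_*) is bounded on L^q(ℝ^d) for some q ∈ (1,∞), and let r ∈ (1, min{q,ρ}). Fix a cube Q₀, a point x ∈ Q₀, a cube Q with x ∈ Q ⊂ Q₀, and let B_x := B(x, 9d·ℓ(Q)). Then for every ξ ∈ Q and every f ∈ L^q(ℝ^d), V_ρ(T_*(f χ_{(B_x ∩ 3Q₀)∖3Q}))(ξ) ≤ C [M(|f|^r)(x)]^{1/r}, where M is the Hardy–Littlewood maximal operator over cubes and C is independent of Q₀, Q, x, ξ and f. -/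
open MeasureTheory Set Filter Classical
open scoped ENNReal
noncomputable section

/-- Volume of a cube. -/
lemma Cube.volume_set {d : ℕ} (Q : Cube d) : volume Q.set = Q.vol := by
  have h : Q.set = (MeasurableEquiv.toLp 2 (Fin d → ℝ)).symm ⁻¹'
      (Set.univ.pi fun i => Set.Ico (Q.c i - Q.l / 2) (Q.c i + Q.l / 2)) := by
    ext y
    simp [Cube.set, Set.mem_pi]
  rw [h, (EuclideanSpace.volume_preserving_symm_measurableEquiv_toLp (Fin d)).measure_preimage_equiv,
    Real.volume_pi_Ico]
  have : ∀ i, Q.c i + Q.l / 2 - (Q.c i - Q.l / 2) = Q.l := fun i => by ring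
  simp only [this, Finset.prod_const, Cube.vol, Finset.card_univ, Fintype.card_fin]
  rw [ENNReal.ofReal_pow Q.hl.le]

lemma tsum_rpow_le {a : ℕ → ℝ≥0∞} {ρ : ℝ} (hρ : 1 < ρ) :
    (∑' i, a i ^ ρ) ^ (1 / ρ) ≤ ∑' i, a i := by
  have h0 : 0 < ρ := by linarith
  rw [one_div, ENNReal.rpow_inv_le_iff h0]
  have e : ∀ b : ℝ≥0∞, b ^ ρ = b * b ^ (ρ - 1) := by
    intro b
    have := ENNReal.rpow_add_of_nonneg (x := b) 1 (ρ - 1) zero_le_one (by linarith)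
    rw [ENNReal.rpow_one] at this
    rw [← this]
    congr 1
    ring
  rw [e (∑' i, a i), ← ENNReal.tsum_mul_right]
  refine ENNReal.tsum_le_tsum fun i => ?_
  rw [e (a i)]
  gcongr
  exact ENNReal.le_tsum i

lemma CZO.var_le {d : ℕ} (S : CZO d) {ρ : ℝ} (hρ : 1 < ρ) (g : Rd d → ℝ) (ξ : Rd d)
    (hg : Measurable g) :
    S.var ρ g ξ ≤ ∫⁻ y, ‖S.K ξ y * g y‖ₑ := by
  by_cases htop : ∫⁻ y, ‖S.K ξ y * g y‖ₑ = ⊤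
  · rw [htop]; exact le_top
  have hm : Measurable fun y => S.K ξ y * g y :=
    (S.measK.comp measurable_prodMk_left).mul hg
  have hi : Integrable (fun y => S.K ξ y * g y) :=
    ⟨hm.aestronglyMeasurable, lt_top_iff_ne_top.2 htop⟩
  refine iSup₂_le fun ε hε => ?_
  refine (tsum_rpow_le hρ).trans ?_
  have hd : Measurable fun y : Rd d => dist ξ y := by fun_prop
  have hA : ∀ i, MeasurableSet ((fun y : Rd d => dist ξ y) ⁻¹' Set.Ioc (ε (i + 1)) (ε i)) :=
    fun i => hd measurableSet_Ioc
  have hstep : ∀ i, ENNReal.ofReal |S.trunc (ε (i + 1)) g ξ - S.trunc (ε i) g ξ| ≤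
      ∫⁻ y in (fun y : Rd d => dist ξ y) ⁻¹' Set.Ioc (ε (i + 1)) (ε i), ‖S.K ξ y * g y‖ₑ := by
    intro i
    have hlt : ε (i + 1) < ε i := hε.1 (Nat.lt_succ_self i)
    have hs : (fun y : Rd d => dist ξ y) ⁻¹' Set.Ioc (ε (i + 1)) (ε i) =
        {y : Rd d | ε (i + 1) < dist ξ y} \ {y : Rd d | ε i < dist ξ y} := by
      ext y; simp
    have hdiff := setIntegral_sdiff (μ := volume) (f := fun y => S.K ξ y * g y)
      (s := {y : Rd d | ε (i + 1) < dist ξ y}) (t := {y : Rd d | ε i < dist ξ y})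
      (measurableSet_lt measurable_const hd) hi.integrableOn
      (fun y hy => lt_trans hlt hy)
    unfold CZO.trunc
    rw [← hdiff, ← hs, ← Real.norm_eq_abs, ofReal_norm]
    exact enorm_integral_le_lintegral_enorm _
  refine (ENNReal.tsum_le_tsum hstep).trans ?_
  have hdisj : Pairwise (Function.onFun Disjoint
      fun i : ℕ => (fun y : Rd d => dist ξ y) ⁻¹' Set.Ioc (ε (i + 1)) (ε i)) := by
    intro i j hij
    exact (hε.1.antitone.pairwise_disjoint_on_Ioc_succ hij).preimage _
  rw [← lintegral_iUnion hA hdisj]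
  exact setLIntegral_le_lintegral _ _

/-- Jensen's inequality on a cube. -/
lemma lintegral_cube_le {d : ℕ} (Q : Cube d) {r : ℝ} (hr : 1 < r) (f : Rd d → ℝ)
    (hf : Measurable f) {x : Rd d} (hx : x ∈ Q.set) :
    ∫⁻ y in Q.set, ENNReal.ofReal |f y| ≤
      Q.vol * maxCube (fun y => |f y| ^ r) x ^ (1 / r) := by
  have hv0 : Q.vol ≠ 0 := by
    unfold Cube.vol
    exact (ENNReal.ofReal_pos.2 (pow_pos Q.hl d)).ne'
  have hvt : Q.vol ≠ ⊤ := ENNReal.ofReal_ne_top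
  have h0 : 0 < r := by linarith
  have hpq := Real.HolderConjugate.conjExponent hr
  have H := ENNReal.lintegral_mul_le_Lp_mul_Lq (volume.restrict Q.set) hpq
    (f := fun y => ENNReal.ofReal |f y|) (g := fun _ => 1)
    (by fun_prop) aemeasurable_const
  have hM : Q.vol⁻¹ * ∫⁻ y in Q.set, ENNReal.ofReal |f y| ^ r ≤
      maxCube (fun y => |f y| ^ r) x := by
    unfold maxCube
    refine le_trans (le_of_eq ?_) (le_iSup₂ (f := fun (Q : Cube d) (_ : x ∈ Q.set) =>
      Q.vol⁻¹ * ∫⁻ y in Q.set, ENNReal.ofReal |(|f y| ^ r)|) Q hx)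
    congr 1
    refine lintegral_congr fun y => ?_
    rw [abs_of_nonneg (Real.rpow_nonneg (abs_nonneg _) _),
      ENNReal.ofReal_rpow_of_nonneg (abs_nonneg _) h0.le]
  simp only [Pi.mul_apply, mul_one, ENNReal.one_rpow, lintegral_const, one_mul,
    Measure.restrict_apply_univ, Q.volume_set] at H
  refine H.trans ?_
  have h2 : ∫⁻ y in Q.set, ENNReal.ofReal |f y| ^ r ≤
      Q.vol * maxCube (fun y => |f y| ^ r) x := by
    rw [ENNReal.inv_mul_le_iff hv0 hvt] at hM
    exact hM
  calc _ ≤ (Q.vol * maxCube (fun y => |f y| ^ r) x) ^ (1 / r) *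
        Q.vol ^ (1 / r.conjExponent) := by gcongr
    _ = (Q.vol ^ (1 / r) * Q.vol ^ (1 / r.conjExponent)) *
        maxCube (fun y => |f y| ^ r) x ^ (1 / r) := by
        rw [ENNReal.mul_rpow_of_nonneg _ _ (by positivity)]; ring
    _ = _ := by
        rw [← ENNReal.rpow_add _ _ hv0 hvt, one_div, one_div, hpq.inv_add_inv_eq_one,
          ENNReal.rpow_one, ← one_div]

lemma cube_dist_lower {d : ℕ} (Q : Cube d) {ξ y : Rd d} (hξ : ξ ∈ Q.set)
    (hy : y ∉ Q.dilate 3) : Q.l ≤ dist ξ y := by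
  simp only [Cube.dilate, Set.mem_setOf_eq, not_forall] at hy
  obtain ⟨i, hi⟩ := hy
  have h1 := hξ i
  have hn : |ξ i - y i| ≤ dist ξ y := by
    have := PiLp.norm_apply_le (ξ - y) i
    rwa [← dist_eq_norm] at this
  have hl := Q.hl
  refine le_trans ?_ hn
  by_cases h : Q.c i - 3 * Q.l / 2 ≤ y i
  · have h3 : Q.c i + 3 * Q.l / 2 ≤ y i := by
      by_contra h4
      exact hi ⟨h, not_le.1 h4⟩
    rw [le_abs]; right; linarith [h1.2]
  · rw [le_abs]; left; linarith [h1.1]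

/-- Bound for the variation of the truncation of `f` to `(B_x ∩ 3Q₀) ∖ 3Q`,
in terms of the Hardy–Littlewood maximal function. -/
theorem variation_local_part_bound
    (d : ℕ) (hd : 0 < d) (S : CZO d) (ρ q : ℝ) (hρ : 2 < ρ) (hq : 1 < q)
    (hbdd : S.VarBdd ρ q) (r : ℝ) (hr : 1 < r) (hrq : r < q) (hrρ : r < ρ) :
    ∃ C : ℝ, 0 < C ∧ ∀ (Q₀ Q : Cube d) (x : Rd d), x ∈ Q₀.set → x ∈ Q.set →
      Q.set ⊆ Q₀.set → ∀ ξ ∈ Q.set, ∀ f : Rd d → ℝ, Measurable f →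
      (∫⁻ y, ENNReal.ofReal |f y| ^ q ∂volume) ≠ ⊤ →
      S.var ρ (((Metric.ball x (9 * (d : ℝ) * Q.l) ∩ Q₀.dilate 3) \ Q.dilate 3).indicator f) ξ ≤
        ENNReal.ofReal C * maxCube (fun y => |f y| ^ r) x ^ (1 / r) := by
  have hdR : (0 : ℝ) < d := by exact_mod_cast hd
  refine ⟨S.Cst * (18 * (d : ℝ)) ^ d, mul_pos S.hCst (by positivity), ?_⟩
  intro Q₀ Q x _ hxQ _ ξ hξ f hf _
  have hl := Q.hl
  have hlp : 0 < Q.l ^ d := pow_pos hl d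
  let Q' : Cube d := ⟨fun i => x i, 18 * (d : ℝ) * Q.l, by positivity⟩
  have hxQ' : x ∈ Q'.set := by
    intro i
    have : 0 < 18 * (d : ℝ) * Q.l := by positivity
    constructor <;> simp only [Q'] <;> linarith
  have hm3 : ∀ P : Cube d, MeasurableSet (P.dilate 3) := by
    intro P
    have : P.dilate 3 = ⋂ i, {y : Rd d | P.c i - 3 * P.l / 2 ≤ y i ∧ y i < P.c i + 3 * P.l / 2} := by
      ext y; simp [Cube.dilate]
    rw [this]
    refine MeasurableSet.iInter fun i => ?_
    have hy : Measurable fun y : Rd d => y i := by fun_prop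
    exact (measurableSet_le measurable_const hy).inter (measurableSet_lt hy measurable_const)
  set E := (Metric.ball x (9 * (d : ℝ) * Q.l) ∩ Q₀.dilate 3) \ Q.dilate 3 with hE
  have hEm : MeasurableSet E :=
    (Metric.isOpen_ball.measurableSet.inter (hm3 Q₀)).diff (hm3 Q)
  have hEsub : E ⊆ Q'.set := by
    intro y hy i
    have h1 : dist y x < 9 * (d : ℝ) * Q.l := hy.1.1
    have hn : |y i - x i| ≤ dist y x := by
      have := PiLp.norm_apply_le (y - x) i
      rwa [← dist_eq_norm] at this
    have h2 := abs_lt.1 (lt_of_le_of_lt hn h1)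
    constructor <;> simp only [Q'] <;> linarith [h2.1, h2.2]
  refine (S.var_le (by linarith) _ ξ (hf.indicator hEm)).trans ?_
  calc ∫⁻ y, ‖S.K ξ y * E.indicator f y‖ₑ
      ≤ ∫⁻ y, E.indicator
          (fun y => ENNReal.ofReal (S.Cst / Q.l ^ d) * ENNReal.ofReal |f y|) y := by
        refine lintegral_mono fun y => ?_
        by_cases hy : y ∈ E
        · simp only [Set.indicator_of_mem hy]
          rw [enorm_mul, ← ofReal_norm, ← ofReal_norm, Real.norm_eq_abs, Real.norm_eq_abs]
          gcongr
          have hdist := cube_dist_lower Q hξ hy.2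
          have hne : ξ ≠ y := dist_pos.1 (lt_of_lt_of_le hl hdist)
          refine (S.size ξ y hne).trans ?_
          have := S.hCst
          gcongr
        · simp [Set.indicator_of_notMem hy]
    _ = ∫⁻ y in E, ENNReal.ofReal (S.Cst / Q.l ^ d) * ENNReal.ofReal |f y| :=
        lintegral_indicator hEm _
    _ = ENNReal.ofReal (S.Cst / Q.l ^ d) * ∫⁻ y in E, ENNReal.ofReal |f y| :=
        lintegral_const_mul _ (by fun_prop)
    _ ≤ ENNReal.ofReal (S.Cst / Q.l ^ d) *
          (Q'.vol * maxCube (fun y => |f y| ^ r) x ^ (1 / r)) := by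
        gcongr
        exact (lintegral_mono_set hEsub).trans (lintegral_cube_le Q' hr f hf hxQ')
    _ = _ := by
        rw [← mul_assoc, Cube.vol, ← ENNReal.ofReal_mul (div_nonneg S.hCst.le hlp.le)]
        congr 2
        simp only [Q']
        rw [mul_pow _ Q.l]
        field_simp
end
end
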